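/- For every integer m > 1, the random uniform attachment graph process with degree cap d = 2m obeys the first-order convergence law: for every first-order sentence φ in the language of graphs (one binary relation symbol interpreted as adjacency, with equality), the probability ℙ(G_n ⊨ φ) converges as n → ∞. -/

import Mathlib

open Finset MeasureTheory Filter Topology FirstOrder
open scoped ENNReal

noncomputable section

open scoped Classical

/-- The degree of vertex `v` in the graph `g`, counting neighbors among `{1, …, n}`. -/
def degIn (g : SimpleGraph ℕ) (n v : ℕ) : ℕ :=
  ((Finset.Icc 1 n).filter fun u => g.Adj v u).card

/-- The set of neighbors of vertex `v` in the graph `g` among `{1, …, n}`. -/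
def nbrsIn (g : SimpleGraph ℕ) (n v : ℕ) : Finset ℕ :=
  (Finset.Icc 1 n).filter fun u => g.Adj v u

/-- `g'` is obtained from `g` (a graph on `{1,…,n}`) by one admissible uniform-attachment
step with parameter `m` and degree cap `d = 2m`: the new vertex `n+1` is joined to `m`
distinct vertices of `{1,…,n}`, each of degree `< 2m` in `g`; adjacencies among the other
vertices are unchanged, and all edges of `g'` stay inside `{1,…,n+1}`. -/
def IsUAStep (m n : ℕ) (g g' : SimpleGraph ℕ) : Prop :=
  (∀ u v, g'.Adj u v → u ∈ Finset.Icc 1 (n+1) ∧ v ∈ Finset.Icc 1 (n+1)) ∧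
  (∀ u v, u ≠ n+1 → v ≠ n+1 → (g'.Adj u v ↔ g.Adj u v)) ∧
  (nbrsIn g' (n+1) (n+1)).card = m ∧
  (∀ u, g'.Adj (n+1) u → u ∈ Finset.Icc 1 n ∧ degIn g n u < 2*m)

/-- The complete graph on the vertex set `{1, …, k}` (as a graph on `ℕ`). -/
def completeOn (k : ℕ) : SimpleGraph ℕ :=
  SimpleGraph.fromRel (fun u v => u ∈ Finset.Icc 1 k ∧ v ∈ Finset.Icc 1 k)

/-- `N(g)`: the number of `m`-element sets of vertices of degree `< 2m` of a graph `g`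
on `{1,…,n}`. -/
def numOpenSets (m n : ℕ) (g : SimpleGraph ℕ) : ℕ :=
  (((Finset.Icc 1 n).filter fun v => degIn g n v < 2*m).card).choose m

/-- The random uniform attachment graph process with parameter `m` (degree cap `d = 2m`),
modeled by random variables `G n` (for `n ≥ m+1`) on a probability space `(Ω, P)` taking
values in simple graphs on `{1,…,n}`: `G (m+1)` is a.s. the complete graph on `{1,…,m+1}`;
a.s. each `G (n+1)` is obtained from `G n` by an admissible uniform attachment step; and
for every graph `g` on `{1,…,n}` and every `m`-element set `S` of vertices of degree `< 2m`
of `g`, `P(G n = g and the neighborhood of n+1 in G (n+1) equals S) = P(G n = g) / N(g)`. -/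
structure UAProcess (m : ℕ) {Ω : Type} [MeasurableSpace Ω] (P : Measure Ω) where
  G : ℕ → Ω → SimpleGraph ℕ
  meas : ∀ n H, MeasurableSet {ω | G n ω = H}
  init : P {ω | G (m+1) ω = completeOn (m+1)} = 1
  stepAdm : ∀ n, m+1 ≤ n → P {ω | IsUAStep m n (G n ω) (G (n+1) ω)} = 1
  stepUnif : ∀ n, m+1 ≤ n → ∀ g : SimpleGraph ℕ,
    (∀ u v, g.Adj u v → u ∈ Finset.Icc 1 n ∧ v ∈ Finset.Icc 1 n) →
    ∀ S : Finset ℕ, S.card = m →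
    (∀ v ∈ S, v ∈ Finset.Icc 1 n ∧ degIn g n v < 2*m) →
    P {ω | G n ω = g ∧ nbrsIn (G (n+1) ω) (n+1) (n+1) = S} =
      P {ω | G n ω = g} / (numOpenSets m n g : ℝ≥0∞)

/-- The simple graph `g`, restricted to its vertex set `{1,…,n}` and viewed as a
first-order structure in the language of graphs (one binary relation interpreted as
adjacency), satisfies the first-order sentence `φ`. -/
def SatFO (g : SimpleGraph ℕ) (n : ℕ) (φ : Language.graph.Sentence) : Prop :=
  letI := SimpleGraph.structure (g.induce (Set.Icc 1 n))
  (Set.Icc 1 n) ⊨ φ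

/-- One step of the averaging operator: the mean of `F` over the moves available at `x`. -/
def avgStep {X τ : Type*} (I : X → Finset τ) (e : X → τ → X) (F : X → ℝ) (x : X) : ℝ :=
  (∑ t ∈ I x, F (e x t)) / (I x).card

theorem avgStep_sub {X τ : Type*} (I : X → Finset τ) (e : X → τ → X) (F G : X → ℝ) :
    avgStep I e (F - G) = avgStep I e F - avgStep I e G := by
  funext x
  simp [avgStep, Finset.sum_sub_distrib, sub_div]

theorem avgStep_iterate_neg {X τ : Type*} (I : X → Finset τ) (e : X → τ → X) (F : X → ℝ)
    (n : ℕ) : (avgStep I e)^[n] (-F) = -(avgStep I e)^[n] F := by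
  induction n with
  | zero => rfl
  | succ n ih =>
    rw [Function.iterate_succ_apply', Function.iterate_succ_apply', ih]
    funext x
    simp [avgStep, neg_div]

theorem norm_avgStep_le {Z τ : Type*} [Fintype Z] (I : Z → Finset τ) (e : Z → τ → Z)
    (F : Z → ℝ) : ‖avgStep I e F‖ ≤ ‖F‖ := by
  refine (pi_norm_le_iff_of_nonneg (norm_nonneg F)).2 fun z => ?_
  rw [avgStep, norm_div, Real.norm_natCast]
  refine div_le_of_le_mul₀ (Nat.cast_nonneg _) (norm_nonneg F) ?_
  calc ‖∑ t ∈ I z, F (e z t)‖ ≤ ∑ t ∈ I z, ‖F (e z t)‖ := norm_sum_le _ _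
    _ ≤ ∑ _t ∈ I z, ‖F‖ := Finset.sum_le_sum fun t _ => norm_le_pi_norm F _
    _ = ‖F‖ * (I z).card := by rw [Finset.sum_const, nsmul_eq_mul, mul_comm]

/-- Bounding a mean from above by singling out one of its terms. -/
theorem avgStep_le {X τ : Type*} (I : X → Finset τ) (e : X → τ → X) (F : X → ℝ) {B p : ℝ}
    {x : X} {t₀ : τ} (ht : t₀ ∈ I x) (hp : p * (I x).card ≤ 1) (hB : ∀ y, F y ≤ B) :
    avgStep I e F x ≤ p * F (e x t₀) + (1 - p) * B := by
  have hc : (0 : ℝ) < (I x).card := by exact_mod_cast Finset.card_pos.2 ⟨t₀, ht⟩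
  rw [avgStep, div_le_iff₀ hc, ← Finset.add_sum_erase _ _ ht]
  have h1 : ∑ t ∈ (I x).erase t₀, F (e x t) ≤ ((I x).card - 1 : ℝ) * B := by
    calc ∑ t ∈ (I x).erase t₀, F (e x t) ≤ ∑ _t ∈ (I x).erase t₀, B :=
          Finset.sum_le_sum fun t _ => hB _
      _ = _ := by
          rw [Finset.sum_const, nsmul_eq_mul, Finset.card_erase_of_mem ht,
            Nat.cast_pred (Finset.card_pos.2 ⟨t₀, ht⟩)]
  nlinarith [hB (e x t₀)]

section FiniteChain

variable {Z τ : Type*} (I : Z → Finset τ) (e : Z → τ → Z) (t₀ : τ)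

theorem avgStep_iterate_le (ht : ∀ z, t₀ ∈ I z) {p : ℝ} (hp0 : 0 ≤ p)
    (hp : ∀ z, p * (I z).card ≤ 1) (F : Z → ℝ) {B : ℝ} (j : ℕ)
    (hB : ∀ i < j, ∀ z, (avgStep I e)^[i] F z ≤ B) (z : Z) :
    (avgStep I e)^[j] F z ≤ p ^ j * F ((fun y => e y t₀)^[j] z) + (1 - p ^ j) * B := by
  induction j generalizing z with
  | zero => simp
  | succ j ih =>
    have h1 := ih (fun i hi => hB i (by omega)) (e z t₀)
    rw [Function.iterate_succ_apply']
    have h2 := avgStep_le I e ((avgStep I e)^[j] F) (ht z) (hp z) (hB j (by omega))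
    rw [Function.iterate_succ_apply, pow_succ]
    nlinarith

theorem eventually_increment_lt [Fintype Z] (ht : ∀ z, t₀ ∈ I z) {p : ℝ} (hp0 : 0 < p)
    (hp : ∀ z, p * (I z).card ≤ 1) {J : ℕ}
    (hJ : ∀ z, e ((fun y => e y t₀)^[J] z) t₀ = (fun y => e y t₀)^[J] z)
    (F : Z → ℝ) {M : ℝ} (hM : 0 < M)
    (hlim : Tendsto (fun n => ‖(avgStep I e)^[n] F - (avgStep I e)^[n + 1] F‖) atTop (𝓝 M)) :
    ∀ᶠ n in atTop, ∀ z, ((avgStep I e)^[n] F - (avgStep I e)^[n + 1] F) z < M := by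
  set u : ℕ → Z → ℝ := fun n => (avgStep I e)^[n] F with hu
  have hub : ∀ n z, |u n z| ≤ ‖F‖ := by
    intro n z
    refine (norm_le_pi_norm (u n) z).trans ?_
    induction n with
    | zero => simp [hu]
    | succ n ih =>
      refine le_trans ?_ ih
      simp only [hu, Function.iterate_succ_apply']
      exact norm_avgStep_le _ _ _
  have hshift : ∀ n j, (avgStep I e)^[j] (u n - u (n + 1)) = u (n + j) - u (n + j + 1) := by
    intro n j
    induction j with
    | zero => rfl
    | succ j ih =>
      rw [Function.iterate_succ_apply', ih, avgStep_sub]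
      simp only [hu, ← Function.iterate_succ_apply' (avgStep I e)]
      rfl
  obtain ⟨T, hT⟩ := exists_nat_gt (2 * ‖F‖ / (M / 2))
  rw [div_lt_iff₀ (by positivity)] at hT
  set η : ℝ := p ^ (J + T) * (M / 2) with hη
  have hη0 : 0 < η := by positivity
  obtain ⟨n₀, hn₀⟩ :=
    (hlim.eventually (Iio_mem_nhds (lt_add_of_pos_right M hη0))).exists_forall_of_atTop
  filter_upwards [eventually_ge_atTop (n₀ + J + T)] with n hn z
  by_contra! hcon
  change M ≤ u n z - u (n + 1) z at hcon
  have hfix : ∀ i, (fun y => e y t₀)^[J + i] z = (fun y => e y t₀)^[J] z := by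
    intro i
    induction i with
    | zero => rfl
    | succ i ih =>
      rw [← Nat.add_assoc, Function.iterate_succ_apply', ih]
      exact hJ z
  set s := (fun y => e y t₀)^[J] z
  have hp1 : p ≤ 1 := by
    have h1 : (1 : ℝ) ≤ (I z).card := by exact_mod_cast Finset.card_pos.2 ⟨t₀, ht z⟩
    nlinarith [hp z]
  have hstep : ∀ i < T, M / 2 ≤ u (n - J - i) s - u (n - J - i + 1) s := by
    intro i hi
    have h1 := avgStep_iterate_le I e t₀ ht hp0.le hp
      (u (n - J - i) - u (n - J - i + 1)) (B := M + η) (J + i)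
      (by
        intro l _ y
        rw [hshift]
        exact ((le_abs_self _).trans (norm_le_pi_norm (u (n - J - i + l) -
          u (n - J - i + l + 1)) y)).trans (hn₀ (n - J - i + l) (by omega)).le) z
    rw [hshift, hfix, show n - J - i + (J + i) = n by omega] at h1
    have hq : 0 < p ^ (J + i) := by positivity
    have h2 : p ^ (J + T) ≤ p ^ (J + i) := pow_le_pow_of_le_one hp0.le hp1 (by omega)
    have h3 : η ≤ p ^ (J + i) * (M / 2) := by rw [hη]; gcongr
    simp only [Pi.sub_apply] at h1
    have h4 : p ^ (J + i) * (M / 2) ≤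
        p ^ (J + i) * (u (n - J - i) s - u (n - J - i + 1) s) := by nlinarith
    exact le_of_mul_le_mul_left h4 hq
  have htel : ∀ i ≤ T, i * (M / 2) ≤ u (n - J - i + 1) s - u (n - J + 1) s := by
    intro i hi
    induction i with
    | zero => simp
    | succ i ih =>
      have h1 := ih (by omega)
      have h2 := hstep i (by omega)
      rw [show n - J - (i + 1) + 1 = n - J - i by omega]
      push_cast
      linarith
  have h1 := htel T le_rfl
  have h2 := abs_le.1 (hub (n - J - T + 1) s)
  have h3 := abs_le.1 (hub (n - J + 1) s)
  linarith

/-- A finite Markov chain in which a distinguished move, available everywhere, leads every state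
to a state fixed by that move has convergent iterated means. -/
theorem exists_tendsto_avgStep_of_finite [Fintype Z] (ht : ∀ z, t₀ ∈ I z)
    (hloop : ∀ z, ∃ J, e ((fun y => e y t₀)^[J] z) t₀ = (fun y => e y t₀)^[J] z)
    (F : Z → ℝ) : ∃ L, Tendsto (fun n => (avgStep I e)^[n] F) atTop (𝓝 L) := by
  set u : ℕ → Z → ℝ := fun n => (avgStep I e)^[n] F with hu
  have hsucc : ∀ n, u (n + 1) = avgStep I e (u n) :=
    fun n => Function.iterate_succ_apply' _ _ _
  obtain ⟨J, hJ⟩ : ∃ J, ∀ z, e ((fun y => e y t₀)^[J] z) t₀ = (fun y => e y t₀)^[J] z := by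
    choose J hJ using hloop
    refine ⟨∑ z, J z, fun z => ?_⟩
    obtain ⟨i, hi⟩ := Nat.exists_eq_add_of_le
      (Finset.single_le_sum (f := J) (fun _ _ => Nat.zero_le _) (Finset.mem_univ z))
    have hfix : ∀ i, (fun y => e y t₀)^[J z + i] z = (fun y => e y t₀)^[J z] z := by
      intro i
      induction i with
      | zero => rfl
      | succ i ih =>
        rw [← Nat.add_assoc, Function.iterate_succ_apply', ih]
        exact hJ z
    rw [hi, hfix]
    exact hJ z
  obtain ⟨p, hp0, hp⟩ : ∃ p : ℝ, 0 < p ∧ ∀ z, p * (I z).card ≤ 1 := by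
    obtain ⟨W, hW⟩ : ∃ W : ℕ, ∀ z, (I z).card ≤ W :=
      ⟨∑ z, (I z).card, fun z => Finset.single_le_sum (f := fun z => (I z).card)
        (fun _ _ => Nat.zero_le _) (Finset.mem_univ z)⟩
    refine ⟨(W + 1 : ℝ)⁻¹, by positivity, fun z => ?_⟩
    rw [inv_mul_le_iff₀ (by positivity), mul_one]
    have h : ((I z).card : ℝ) ≤ W := by exact_mod_cast hW z
    linarith
  have hanti : Antitone fun n => ‖u n - u (n + 1)‖ := by
    refine antitone_nat_of_succ_le fun n => ?_
    rw [hsucc (n + 1)]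
    nth_rewrite 1 [hsucc n]
    rw [← avgStep_sub]
    exact norm_avgStep_le _ _ _
  have hlim := tendsto_atTop_ciInf hanti ⟨0, by rintro _ ⟨n, rfl⟩; exact norm_nonneg _⟩
  set M : ℝ := ⨅ n, ‖u n - u (n + 1)‖
  have hM0 : 0 ≤ M := le_ciInf fun n => norm_nonneg _
  have hle : ∀ n, M ≤ ‖u n - u (n + 1)‖ := fun n =>
    ciInf_le ⟨0, by rintro _ ⟨n, rfl⟩; exact norm_nonneg _⟩ n
  have hM : M = 0 := by
    by_contra hne
    have hMpos : 0 < M := lt_of_le_of_ne hM0 (Ne.symm hne)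
    have h1 := eventually_increment_lt I e t₀ ht hp0 hp hJ F hMpos hlim
    have h2 := eventually_increment_lt I e t₀ ht hp0 hp hJ (-F) hMpos (by
      refine hlim.congr fun n => ?_
      rw [avgStep_iterate_neg, avgStep_iterate_neg, ← norm_neg]
      congr 1
      simp only [hu]
      abel)
    obtain ⟨n, h1, h2⟩ := (h1.and h2).exists
    have := (pi_norm_lt_iff hMpos).2 fun z => by
      have h3 := h1 z
      have h4 := h2 z
      rw [avgStep_iterate_neg, avgStep_iterate_neg] at h4
      simp only [Pi.sub_apply, Pi.neg_apply] at h3 h4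
      change ‖(u n - u (n + 1)) z‖ < M
      rw [Real.norm_eq_abs, abs_lt, Pi.sub_apply]
      exact ⟨by simp only [hu]; linarith, h3⟩
    exact absurd this (not_lt.2 (hle n))
  rw [hM] at hlim
  have hbdd : ∀ n, u n ∈ Metric.closedBall (0 : Z → ℝ) ‖F‖ := by
    intro n
    rw [mem_closedBall_zero_iff]
    induction n with
    | zero => simp [hu]
    | succ n ih =>
      rw [hsucc]
      exact (norm_avgStep_le _ _ _).trans ih
  obtain ⟨L, -, ψ, hψ, hL⟩ := (isCompact_closedBall (0 : Z → ℝ) ‖F‖).tendsto_subseq hbdd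
  have hcont : ∀ n, ‖avgStep I e (u n) - avgStep I e L‖ ≤ ‖u n - L‖ := fun n => by
    rw [← avgStep_sub]
    exact norm_avgStep_le _ _ _
  have hL0 : Tendsto (fun n => ‖u (ψ n) - L‖) atTop (𝓝 0) :=
    tendsto_iff_norm_sub_tendsto_zero.1 hL
  have hfix : avgStep I e L = L := by
    have hb : ∀ n, ‖avgStep I e L - L‖ ≤
        ‖u (ψ n) - L‖ + ‖u (ψ n) - u (ψ n + 1)‖ + ‖u (ψ n) - L‖ := by
      intro n
      have h1 := hcont (ψ n)
      rw [← hsucc] at h1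
      have h2 : avgStep I e L - L = -(u (ψ n + 1) - avgStep I e L)
        + -(u (ψ n) - u (ψ n + 1)) + (u (ψ n) - L) := by abel
      rw [h2]
      refine (norm_add₃_le).trans ?_
      rw [norm_neg, norm_neg]
      linarith
    have h0 := (hL0.add (hlim.comp hψ.tendsto_atTop)).add hL0
    simp only [add_zero] at h0
    have := ge_of_tendsto' h0 hb
    exact sub_eq_zero.1 (norm_le_zero_iff.1 this)
  refine ⟨L, tendsto_iff_norm_sub_tendsto_zero.2 ?_⟩
  have hanti' : Antitone fun n => ‖u n - L‖ := antitone_nat_of_succ_le fun n => by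
    have := hcont n
    rwa [← hsucc, hfix] at this
  have h1 := tendsto_atTop_ciInf hanti' ⟨0, by rintro _ ⟨n, rfl⟩; exact norm_nonneg _⟩
  have h2 := tendsto_nhds_unique (h1.comp hψ.tendsto_atTop) hL0
  rwa [h2] at h1

end FiniteChain

/-- Convergence of iterated means for a chain on `X` that is lumpable, through the colouring `c`,
to a finite chain. -/
theorem exists_tendsto_avgStep {X τ σ : Type*} {Good : X → Prop} {c : X → σ}
    (hfin : (c '' {x | Good x}).Finite) (I : X → Finset τ) (e : X → τ → X) (t₀ : τ)
    (ht : ∀ x, Good x → t₀ ∈ I x) (he : ∀ x, Good x → ∀ t ∈ I x, Good (e x t))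
    (hI : ∀ x y, Good x → Good y → c x = c y → I x = I y)
    (hc : ∀ x y, Good x → Good y → c x = c y → ∀ t ∈ I x, c (e x t) = c (e y t))
    (hloop : ∀ x, Good x → ∃ J, c ((fun y => e y t₀)^[J + 1] x) = c ((fun y => e y t₀)^[J] x))
    (F : X → ℝ) (hF : ∀ x y, Good x → Good y → c x = c y → F x = F y) (x : X) (hx : Good x) :
    ∃ L, Tendsto (fun n => (avgStep I e)^[n] F x) atTop (𝓝 L) := by
  let Z := ↥(c '' {x | Good x})
  have : Fintype Z := hfin.fintype
  let cl : ∀ x, Good x → Z := fun x hx => ⟨c x, x, hx, rfl⟩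
  choose rep hrep hcrep using fun z : Z => z.2
  let IZ : Z → Finset τ := fun z => I (rep z)
  let eZ : Z → τ → Z := fun z t =>
    if h : t ∈ I (rep z) then cl (e (rep z) t) (he _ (hrep z) t h) else z
  have hIZ : ∀ x (hx : Good x), IZ (cl x hx) = I x := fun x hx =>
    hI _ _ (hrep _) hx (hcrep (cl x hx))
  have heZ : ∀ x (hx : Good x), ∀ t (h : t ∈ I x), eZ (cl x hx) t = cl (e x t) (he x hx t h) := by
    intro x hx t h
    have h' : t ∈ I (rep (cl x hx)) := by rw [← hIZ x hx] at h; exact h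
    simp only [eZ, h', dif_pos]
    exact Subtype.ext (hc _ _ (hrep _) hx (hcrep (cl x hx)) t h')
  have hiter : ∀ n x (hx : Good x), ∃ h : Good ((fun y => e y t₀)^[n] x),
      (fun y => eZ y t₀)^[n] (cl x hx) = cl _ h := by
    intro n x hx
    induction n with
    | zero => exact ⟨hx, rfl⟩
    | succ n ih =>
      obtain ⟨h, ih⟩ := ih
      simp only [Function.iterate_succ_apply']
      refine ⟨he _ h _ (ht _ h), ?_⟩
      rw [ih]
      exact heZ _ h _ (ht _ h)
  have hval : ∀ n x (hx : Good x),
      (avgStep I e)^[n] F x = (avgStep IZ eZ)^[n] (fun z => F (rep z)) (cl x hx) := by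
    intro n
    induction n with
    | zero => exact fun x hx => hF _ _ hx (hrep _) (hcrep (cl x hx)).symm
    | succ n ih =>
      intro x hx
      simp only [Function.iterate_succ_apply']
      rw [avgStep, avgStep, hIZ x hx]
      congr 1
      refine Finset.sum_congr rfl fun t h => ?_
      rw [heZ x hx t h]
      exact ih _ (he x hx t h)
  obtain ⟨L, hL⟩ := exists_tendsto_avgStep_of_finite IZ eZ t₀ (fun z => ht _ (hrep z))
    (fun z => by
      obtain ⟨J, hJ⟩ := hloop (rep z) (hrep z)
      have hz : cl (rep z) (hrep z) = z := Subtype.ext (hcrep z)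
      refine ⟨J, ?_⟩
      obtain ⟨h1, h2⟩ := hiter J (rep z) (hrep z)
      obtain ⟨h3, h4⟩ := hiter (J + 1) (rep z) (hrep z)
      rw [hz] at h2 h4
      rw [Function.iterate_succ_apply'] at h4
      rw [h4, h2]
      exact Subtype.ext hJ)
    (fun z => F (rep z))
  refine ⟨L (cl x hx), ?_⟩
  simp only [hval _ x hx]
  exact (tendsto_pi_nhds.1 hL) _

/-- Rank-`k` types of `ι`-indexed tuples in vertex-labelled graphs with labels in `Λ`: a rank-`0`
type records equality, adjacency and labels, and a rank-`k+1` type is the set of rank-`k` types of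
the one-point extensions of the tuple. -/
def RankType (Λ : Type) : ℕ → Type → Type
  | 0, ι => (ι → ι → Prop) × (ι → ι → Prop) × (ι → Λ)
  | k + 1, ι => Set (RankType Λ k (Option ι))

instance RankType.finite {Λ : Type} [Finite Λ] (k : ℕ) (ι : Type) [Finite ι] :
    Finite (RankType Λ k ι) := by
  induction k generalizing ι with
  | zero =>
    change Finite ((ι → ι → Prop) × (ι → ι → Prop) × (ι → Λ))
    infer_instance
  | succ k ih =>
    change Finite (Set (RankType Λ k (Option ι)))
    have := ih (Option ι)
    infer_instance

/-- Extension of a tuple by one more vertex. -/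
def extendTuple {ι : Type} (a : ι → ℕ) (v : ℕ) : Option ι → ℕ := fun o => o.elim v a

/-- The rank-`k` type of the tuple `a` in the graph `g` on `{1, …, N}` with labelling `lab`. -/
def rankType {Λ : Type} (g : SimpleGraph ℕ) (N : ℕ) (lab : ℕ → Λ) :
    (k : ℕ) → {ι : Type} → (ι → ℕ) → RankType Λ k ι
  | 0, _, a => (fun i j => a i = a j, fun i j => g.Adj (a i) (a j), fun i => lab (a i))
  | k + 1, _, a => {t | ∃ v ∈ Finset.Icc 1 N, rankType g N lab k (extendTuple a v) = t}

section RankType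

variable {Λ : Type} {g g' : SimpleGraph ℕ} {N N' : ℕ} {lab lab' : ℕ → Λ} {ι : Type}
  {a b : ι → ℕ}

theorem rankType_zero_iff :
    rankType g N lab 0 a = rankType g' N' lab' 0 b ↔
      (∀ i j, a i = a j ↔ b i = b j) ∧ (∀ i j, g.Adj (a i) (a j) ↔ g'.Adj (b i) (b j)) ∧
        ∀ i, lab (a i) = lab' (b i) := by
  simp only [rankType, RankType, Prod.mk.injEq, funext_iff, eq_iff_iff]

theorem rankType_succ_iff {k : ℕ} :
    rankType g N lab (k + 1) a = rankType g' N' lab' (k + 1) b ↔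
      (∀ v ∈ Finset.Icc 1 N, ∃ w ∈ Finset.Icc 1 N',
        rankType g N lab k (extendTuple a v) = rankType g' N' lab' k (extendTuple b w)) ∧
      (∀ w ∈ Finset.Icc 1 N', ∃ v ∈ Finset.Icc 1 N,
        rankType g N lab k (extendTuple a v) = rankType g' N' lab' k (extendTuple b w)) := by
  constructor
  · intro h
    simp only [rankType] at h
    constructor
    · intro v hv
      have h1 : rankType g N lab k (extendTuple a v) ∈
          {t | ∃ v ∈ Finset.Icc 1 N, rankType g N lab k (extendTuple a v) = t} := ⟨v, hv, rfl⟩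
      rw [h] at h1
      obtain ⟨w, hw, h2⟩ := h1
      exact ⟨w, hw, h2.symm⟩
    · intro w hw
      have h1 : rankType g' N' lab' k (extendTuple b w) ∈
          {t | ∃ v ∈ Finset.Icc 1 N', rankType g' N' lab' k (extendTuple b v) = t} := ⟨w, hw, rfl⟩
      rw [← h] at h1
      exact h1
  · rintro ⟨h1, h2⟩
    refine Set.ext fun t => ⟨?_, ?_⟩
    · rintro ⟨v, hv, rfl⟩
      obtain ⟨w, hw, h⟩ := h1 v hv
      exact ⟨w, hw, h.symm⟩
    · rintro ⟨w, hw, rfl⟩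
      exact h2 w hw

theorem rankType_comp {k : ℕ} {κ : Type} (c : κ → ι)
    (h : rankType g N lab k a = rankType g' N' lab' k b) :
    rankType g N lab k (a ∘ c) = rankType g' N' lab' k (b ∘ c) := by
  induction k generalizing ι κ with
  | zero =>
    rw [rankType_zero_iff] at h ⊢
    exact ⟨fun i j => h.1 _ _, fun i j => h.2.1 _ _, fun i => h.2.2 _⟩
  | succ k ih =>
    rw [rankType_succ_iff] at h ⊢
    have hext : ∀ (f : ι → ℕ) v, extendTuple (f ∘ c) v = extendTuple f v ∘ Option.map c := by
      intro f v
      funext o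
      cases o <;> rfl
    constructor
    · intro v hv
      obtain ⟨w, hw, h'⟩ := h.1 v hv
      refine ⟨w, hw, ?_⟩
      rw [hext, hext]
      exact ih _ h'
    · intro w hw
      obtain ⟨v, hv, h'⟩ := h.2 w hw
      refine ⟨v, hv, ?_⟩
      rw [hext, hext]
      exact ih _ h'

theorem rankType_of_succ {k : ℕ} (hN : 1 ≤ N)
    (h : rankType g N lab (k + 1) a = rankType g' N' lab' (k + 1) b) :
    rankType g N lab k a = rankType g' N' lab' k b := by
  obtain ⟨w, -, h'⟩ := (rankType_succ_iff.1 h).1 1 (by simp [hN])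
  exact rankType_comp some h'

theorem rankType_mono {k l : ℕ} (hkl : k ≤ l) (hN : 1 ≤ N)
    (h : rankType g N lab l a = rankType g' N' lab' l b) :
    rankType g N lab k a = rankType g' N' lab' k b := by
  induction l, hkl using Nat.le_induction with
  | base => exact h
  | succ l _ ih => exact ih (rankType_of_succ hN h)

end RankType

/-- `(gE, labE)` is the labelled graph obtained from `(g, lab)` on `{1, …, N}` by adding the vertex
`N + 1` with label `l₀`, joined to the vertices with label in `s`, and relabelling by `h`. -/
structure IsLabelledExtension {Λ : Type} (s : Set Λ) (h : Λ → Λ) (l₀ : Λ) (N : ℕ)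
    (g : SimpleGraph ℕ) (lab : ℕ → Λ) (gE : SimpleGraph ℕ) (labE : ℕ → Λ) : Prop where
  adj_old : ∀ u ∈ Finset.Icc 1 N, ∀ v ∈ Finset.Icc 1 N, (gE.Adj u v ↔ g.Adj u v)
  adj_new : ∀ u ∈ Finset.Icc 1 N, (gE.Adj (N + 1) u ↔ lab u ∈ s)
  lab_old : ∀ u ∈ Finset.Icc 1 N, labE u = h (lab u)
  lab_new : labE (N + 1) = l₀

/-- Types of an extension are determined by types of the original labelled graph. -/
theorem rankType_extension {Λ : Type} {s : Set Λ} {h : Λ → Λ} {l₀ : Λ} {N N' : ℕ}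
    {g gE g' gE' : SimpleGraph ℕ} {lab labE lab' labE' : ℕ → Λ}
    (hE : IsLabelledExtension s h l₀ N g lab gE labE)
    (hE' : IsLabelledExtension s h l₀ N' g' lab' gE' labE')
    (hN : 1 ≤ N) {k : ℕ} {ι κ : Type} {a b : ι → ℕ} (c : κ → Option ι)
    (ha : ∀ i, a i ∈ Finset.Icc 1 N) (hb : ∀ i, b i ∈ Finset.Icc 1 N')
    (hab : rankType g N lab k a = rankType g' N' lab' k b) :
    rankType gE (N + 1) labE k (extendTuple a (N + 1) ∘ c) =
      rankType gE' (N' + 1) labE' k (extendTuple b (N' + 1) ∘ c) := by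
  induction k generalizing ι κ with
  | zero =>
    rw [rankType_zero_iff] at hab ⊢
    have ha' : ∀ i, a i ≠ N + 1 := fun i => by have := Finset.mem_Icc.1 (ha i); omega
    have hb' : ∀ i, b i ≠ N' + 1 := fun i => by have := Finset.mem_Icc.1 (hb i); omega
    refine ⟨fun i j => ?_, fun i j => ?_, fun i => ?_⟩ <;> simp only [Function.comp]
    · rcases c i with _ | x <;> rcases c j with _ | y <;>
        simp [extendTuple, ha', hb', (ha' _).symm, (hb' _).symm, hab.1]
    · rcases c i with _ | x <;> rcases c j with _ | y
      · simp [extendTuple]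
      · simp only [extendTuple, Option.elim]
        rw [hE.adj_new _ (ha y), hE'.adj_new _ (hb y), hab.2.2]
      · simp only [extendTuple, Option.elim]
        rw [SimpleGraph.adj_comm, hE.adj_new _ (ha x), SimpleGraph.adj_comm,
          hE'.adj_new _ (hb x), hab.2.2]
      · simp only [extendTuple, Option.elim]
        rw [hE.adj_old _ (ha x) _ (ha y), hE'.adj_old _ (hb x) _ (hb y), hab.2.1]
    · rcases c i with _ | x
      · simp only [extendTuple, Option.elim]
        rw [hE.lab_new, hE'.lab_new]
      · simp only [extendTuple, Option.elim]
        rw [hE.lab_old _ (ha x), hE'.lab_old _ (hb x), hab.2.2]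
  | succ k ih =>
    have hnew : ∀ (f : ι → ℕ) (K : ℕ), extendTuple (extendTuple f K ∘ c) K =
        extendTuple f K ∘ fun o : Option κ => o.elim none c := by
      intro f K
      funext o
      cases o <;> rfl
    have hold : ∀ (f : ι → ℕ) (K v : ℕ), extendTuple (extendTuple f K ∘ c) v =
        extendTuple (extendTuple f v) K ∘
          fun o : Option κ => o.elim (some none) (Option.map some ∘ c) := by
      intro f K v
      funext o
      rcases o with _ | j
      · rfl
      · simp only [extendTuple, Function.comp, Option.elim]
        cases c j <;> rfl
    have hmem : ∀ (f : ι → ℕ) (K v : ℕ), (∀ i, f i ∈ Finset.Icc 1 K) → v ∈ Finset.Icc 1 K →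
        ∀ o, extendTuple f v o ∈ Finset.Icc 1 K := by
      intro f K v hf hv o
      cases o
      exacts [hv, hf _]
    have hlow := rankType_of_succ hN hab
    have hcases : ∀ K v : ℕ, v ∈ Finset.Icc 1 (K + 1) → v = K + 1 ∨ v ∈ Finset.Icc 1 K := by
      intro K v hv
      simp only [Finset.mem_Icc] at hv ⊢
      omega
    rw [rankType_succ_iff] at hab ⊢
    constructor
    · intro v hv
      rcases hcases _ _ hv with rfl | hv
      · refine ⟨N' + 1, by simp, ?_⟩
        rw [hnew, hnew]
        exact ih _ ha hb hlow
      · obtain ⟨w, hw, h'⟩ := hab.1 v hv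
        refine ⟨w, Finset.Icc_subset_Icc_right (Nat.le_succ _) hw, ?_⟩
        rw [hold, hold]
        exact ih _ (hmem _ _ _ ha hv) (hmem _ _ _ hb hw) h'
    · intro w hw
      rcases hcases _ _ hw with rfl | hw
      · refine ⟨N + 1, by simp, ?_⟩
        rw [hnew, hnew]
        exact ih _ ha hb hlow
      · obtain ⟨v, hv, h'⟩ := hab.2 w hw
        refine ⟨v, Finset.Icc_subset_Icc_right (Nat.le_succ _) hv, ?_⟩
        rw [hold, hold]
        exact ih _ (hmem _ _ _ ha hv) (hmem _ _ _ hb hw) h'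

/-- Truth of a first-order formula is determined by the rank-`k` type of the assignment, for `k`
large enough. -/
theorem exists_rank_realize_iff {l : ℕ} (φ : Language.graph.BoundedFormula Empty l) :
    ∃ k : ℕ, ∀ {Λ ι : Type} {g g' : SimpleGraph ℕ} {N N' : ℕ} {lab lab' : ℕ → Λ}
      {a b : ι → ℕ} (_ : 1 ≤ N)
      (xs : Fin l → Set.Icc 1 N) (ys : Fin l → Set.Icc 1 N') (c : Fin l → ι)
      (_ : ∀ i, (xs i : ℕ) = a (c i)) (_ : ∀ i, (ys i : ℕ) = b (c i))
      (_ : rankType g N lab k a = rankType g' N' lab' k b),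
      (letI := SimpleGraph.structure (g.induce (Set.Icc 1 N));
        φ.Realize (default : Empty → Set.Icc 1 N) xs) ↔
      (letI := SimpleGraph.structure (g'.induce (Set.Icc 1 N'));
        φ.Realize (default : Empty → Set.Icc 1 N') ys) := by
  have hterm : ∀ {l : ℕ} (t : Language.graph.Term (Empty ⊕ Fin l)),
      ∃ i, t = Language.Term.var (Sum.inr i) := by
    intro l t
    rcases t with (e | i) | ⟨f, _⟩
    · exact e.elim
    · exact ⟨i, rfl⟩
    · exact isEmptyElim f
  induction φ with
  | falsum => exact ⟨0, fun _ _ _ _ _ _ _ => Iff.rfl⟩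
  | equal t₁ t₂ =>
    obtain ⟨i, rfl⟩ := hterm t₁
    obtain ⟨j, rfl⟩ := hterm t₂
    refine ⟨0, fun _ xs ys c hx hy h => ?_⟩
    rw [rankType_zero_iff] at h
    change xs i = xs j ↔ ys i = ys j
    rw [← Subtype.coe_inj, ← Subtype.coe_inj, hx, hx, hy, hy, h.1]
  | rel R ts =>
    cases R
    obtain ⟨i, hi⟩ := hterm (ts 0)
    obtain ⟨j, hj⟩ := hterm (ts 1)
    refine ⟨0, fun {_ _ g g' N N' _ _ _ _} _ xs ys c hx hy h => ?_⟩
    rw [rankType_zero_iff] at h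
    let := SimpleGraph.structure (g.induce (Set.Icc 1 N))
    let := SimpleGraph.structure (g'.induce (Set.Icc 1 N'))
    change g.Adj ((ts 0).realize (Sum.elim default xs) : Set.Icc 1 N)
      ((ts 1).realize (Sum.elim default xs) : Set.Icc 1 N) ↔
      g'.Adj ((ts 0).realize (Sum.elim default ys) : Set.Icc 1 N')
      ((ts 1).realize (Sum.elim default ys) : Set.Icc 1 N')
    rw [hi, hj]
    simp only [Language.Term.realize_var, Sum.elim_inr]
    rw [hx, hx, hy, hy, h.2.1]
  | imp φ ψ ihφ ihψ =>
    obtain ⟨k₁, h₁⟩ := ihφ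
    obtain ⟨k₂, h₂⟩ := ihψ
    refine ⟨max k₁ k₂, fun hN xs ys c hx hy h => ?_⟩
    exact imp_congr (h₁ hN xs ys c hx hy (rankType_mono (le_max_left _ _) hN h))
      (h₂ hN xs ys c hx hy (rankType_mono (le_max_right _ _) hN h))
  | @all l φ ih =>
    obtain ⟨k, ih⟩ := ih
    refine ⟨k + 1, fun {_ ι g g' N N' lab lab' a b} hN xs ys c hx hy h => ?_⟩
    rw [rankType_succ_iff] at h
    have hsnoc : ∀ {M : ℕ} (f : ι → ℕ) (zs : Fin l → Set.Icc 1 M) (v : Set.Icc 1 M),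
        (∀ i, (zs i : ℕ) = f (c i)) → ∀ i, ((Fin.snoc zs v : Fin (l + 1) → Set.Icc 1 M) i : ℕ) =
          extendTuple f v ((Fin.snoc (some ∘ c) none : Fin (l + 1) → Option ι) i) := by
      intro M f zs v hz i
      refine Fin.lastCases ?_ (fun i => ?_) i
      · simp [extendTuple]
      · simp [extendTuple, hz]
    constructor
    · intro hall w
      obtain ⟨v, hv, h'⟩ := h.2 w (Finset.mem_Icc.2 w.2)
      exact (ih hN _ _ _ (hsnoc a xs ⟨v, Finset.mem_Icc.1 hv⟩ hx) (hsnoc b ys w hy) h').1 (hall _)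
    · intro hall v
      obtain ⟨w, hw, h'⟩ := h.1 v (Finset.mem_Icc.2 v.2)
      exact (ih hN _ _ _ (hsnoc a xs v hx) (hsnoc b ys ⟨w, Finset.mem_Icc.1 hw⟩ hy) h').2 (hall _)

theorem exists_rank_satFO_iff (φ : Language.graph.Sentence) :
    ∃ k : ℕ, ∀ {Λ : Type} {g g' : SimpleGraph ℕ} {N N' : ℕ} {lab lab' : ℕ → Λ}, 1 ≤ N →
      rankType g N lab k (Empty.elim : Empty → ℕ) = rankType g' N' lab' k Empty.elim →
      (SatFO g N φ ↔ SatFO g' N' φ) := by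
  obtain ⟨k, hk⟩ := exists_rank_realize_iff φ
  exact ⟨k, fun hN h => hk hN default default Fin.elim0 (fun i => i.elim0) (fun i => i.elim0) h⟩

/-- Two tuples of vertices are similar up to distance `R` if corresponding signed differences
agree, or are both at least `R`, or are both at most `-R`. -/
def TupleSimilar {ι : Type} (R : ℤ) (a b : ι → ℕ) : Prop :=
  ∀ i j, ((a i : ℤ) - a j = b i - b j) ∨ (R ≤ (a i : ℤ) - a j ∧ R ≤ (b i : ℤ) - b j) ∨
    (R ≤ (a j : ℤ) - a i ∧ R ≤ (b j : ℤ) - b i)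

theorem TupleSimilar.symm {ι : Type} {R : ℤ} {a b : ι → ℕ} (h : TupleSimilar R a b) :
    TupleSimilar R b a := by
  intro i j
  have := h i j
  omega

theorem TupleSimilar.extendTuple_of_forall {ι : Type} {R : ℤ} {a b : ι → ℕ} {v w : ℕ}
    (h : TupleSimilar R a b) (hvw : ∀ i, ((a i : ℤ) - v = b i - w) ∨
      (R ≤ (a i : ℤ) - v ∧ R ≤ (b i : ℤ) - w) ∨ (R ≤ (v : ℤ) - a i ∧ R ≤ (w : ℤ) - b i)) :
    TupleSimilar R (extendTuple a v) (extendTuple b w) := by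
  rintro (_ | i) (_ | j) <;> simp only [extendTuple, Option.elim]
  · omega
  · have := hvw j
    omega
  · exact hvw i
  · exact h i j

theorem TupleSimilar.exists_extend {ι : Type} {R : ℤ} (hR : 0 < R) {a b : ι → ℕ} {N N' : ℕ}
    (h : TupleSimilar (2 * R) a b) {lo hi : ι} (hal : a lo = 1) (hbl : b lo = 1) (hah : a hi = N)
    (hbh : b hi = N') {v : ℕ} (hv : v ∈ Finset.Icc 1 N) :
    ∃ w ∈ Finset.Icc 1 N', TupleSimilar R (extendTuple a v) (extendTuple b w) := by
  rw [Finset.mem_Icc] at hv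
  have hweak : TupleSimilar R a b := fun i j => by
    have := h i j
    omega
  by_cases hclose : ∃ i, |(v : ℤ) - a i| < R
  · obtain ⟨i, hi'⟩ := hclose
    rw [abs_lt] at hi'
    have h1 := h lo i
    have h2 := h hi i
    obtain ⟨w, hw⟩ : ∃ w : ℕ, (w : ℤ) = b i + (v - a i) :=
      ⟨(b i + (v - a i) : ℤ).toNat, Int.toNat_of_nonneg (by omega)⟩
    refine ⟨w, Finset.mem_Icc.2 (by omega), hweak.extendTuple_of_forall fun j => ?_⟩
    have h3 := h j i
    omega
  · push Not at hclose
    have hfar : ∀ i, R ≤ (v : ℤ) - a i ∨ R ≤ (a i : ℤ) - v := fun i => le_abs'.1 (hclose i) |>.elim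
      (fun h => Or.inr (by omega)) Or.inl
    have hlo := hfar lo
    obtain ⟨i, hiv, hmax⟩ := (measure fun i => v - a i).wf.has_min {i | a i < v}
      ⟨lo, by simp only [Set.mem_ofPred_eq]; omega⟩
    simp only [Set.mem_ofPred_eq, WellFoundedRelation.rel, InvImage] at hiv hmax
    have hmax' : ∀ l, a l < v → a l ≤ a i := fun l hl => by
      have := hmax l hl
      simp only [not_lt] at this
      omega
    have hi1 := hfar i
    have h1 := h lo i
    have h2 := h hi i
    have h3 := hfar hi
    have h4 := hmax' lo
    obtain ⟨w, hw⟩ : ∃ w : ℕ, (w : ℤ) = b i + R :=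
      ⟨(b i + R : ℤ).toNat, Int.toNat_of_nonneg (by omega)⟩
    refine ⟨w, Finset.mem_Icc.2 (by omega), hweak.extendTuple_of_forall fun j => ?_⟩
    have h5 := h j i
    have h6 := hfar j
    have h7 := hmax' j
    omega

/-- If adjacency and labels only depend on small distances between vertices and to the end points,
then similar tuples have the same type. -/
theorem rankType_eq_of_similar {Λ : Type} {g g' : SimpleGraph ℕ} {N N' : ℕ} {lab lab' : ℕ → Λ}
    {R : ℤ} (hR : 0 < R)
    (hlab : ∀ u ∈ Finset.Icc 1 N, ∀ u' ∈ Finset.Icc 1 N',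
      (u = u' ∨ (R ≤ (u : ℤ) - 1 ∧ R ≤ (u' : ℤ) - 1)) →
      ((N : ℤ) - u = N' - u' ∨ (R ≤ (N : ℤ) - u ∧ R ≤ (N' : ℤ) - u')) → lab u = lab' u')
    (hadj : ∀ u ∈ Finset.Icc 1 N, ∀ u' ∈ Finset.Icc 1 N', ∀ v ∈ Finset.Icc 1 N,
      ∀ v' ∈ Finset.Icc 1 N',
      (u = u' ∨ (R ≤ (u : ℤ) - 1 ∧ R ≤ (u' : ℤ) - 1)) →
      (v = v' ∨ (R ≤ (v : ℤ) - 1 ∧ R ≤ (v' : ℤ) - 1)) →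
      (((u : ℤ) - v = u' - v') ∨ (R ≤ (u : ℤ) - v ∧ R ≤ (u' : ℤ) - v') ∨
        (R ≤ (v : ℤ) - u ∧ R ≤ (v' : ℤ) - u')) → (g.Adj u v ↔ g'.Adj u' v'))
    (k : ℕ) {ι : Type} {a b : ι → ℕ} (ha : ∀ i, a i ∈ Finset.Icc 1 N)
    (hb : ∀ i, b i ∈ Finset.Icc 1 N') {lo hi : ι} (hal : a lo = 1) (hbl : b lo = 1)
    (hah : a hi = N) (hbh : b hi = N') (h : TupleSimilar (2 ^ k * R) a b) :
    rankType g N lab k a = rankType g' N' lab' k b := by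
  induction k generalizing ι with
  | zero =>
    rw [pow_zero, one_mul] at h
    have hlow : ∀ i, a i = b i ∨ (R ≤ (a i : ℤ) - 1 ∧ R ≤ (b i : ℤ) - 1) := fun i => by
      have h1 := h i lo
      have h2 := Finset.mem_Icc.1 (ha i)
      omega
    rw [rankType_zero_iff]
    refine ⟨fun i j => ?_, fun i j => ?_, fun i => ?_⟩
    · have := h i j
      omega
    · exact hadj _ (ha i) _ (hb i) _ (ha j) _ (hb j) (hlow i) (hlow j) (h i j)
    · refine hlab _ (ha i) _ (hb i) (hlow i) ?_
      have h1 := h hi i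
      have h2 := Finset.mem_Icc.1 (ha i)
      omega
  | succ k ih =>
    rw [pow_succ', mul_assoc] at h
    have hR' : 0 < 2 ^ k * R := by positivity
    have hmem : ∀ (f : ι → ℕ) (K v : ℕ), (∀ i, f i ∈ Finset.Icc 1 K) → v ∈ Finset.Icc 1 K →
        ∀ o, extendTuple f v o ∈ Finset.Icc 1 K := by
      intro f K v hf hv o
      cases o
      exacts [hv, hf _]
    rw [rankType_succ_iff]
    constructor
    · intro v hv
      obtain ⟨w, hw, h'⟩ := h.exists_extend hR' hal hbl hah hbh hv
      exact ⟨w, hw, ih (hmem _ _ _ ha hv) (hmem _ _ _ hb hw) (lo := some lo) (hi := some hi)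
        hal hbl hah hbh h'⟩
    · intro w hw
      obtain ⟨v, hv, h'⟩ := h.symm.exists_extend hR' hbl hal hbh hah hw
      exact ⟨v, hv, ih (hmem _ _ _ ha hv) (hmem _ _ _ hb hw) (lo := some lo) (hi := some hi)
        hal hbl hah hbh h'.symm⟩

/-- The vertices of `{1, …, n}` of degree less than `2m`. -/
def openVerts (m : ℕ) (g : SimpleGraph ℕ) (n : ℕ) : Finset ℕ :=
  (Finset.Icc 1 n).filter fun v => degIn g n v < 2 * m

theorem mem_openVerts {m n v : ℕ} {g : SimpleGraph ℕ} :
    v ∈ openVerts m g n ↔ v ∈ Finset.Icc 1 n ∧ degIn g n v < 2 * m :=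
  Finset.mem_filter

/-- The graph obtained from `g` by joining the vertex `n + 1` to all vertices of `S`. -/
def addVertex (g : SimpleGraph ℕ) (n : ℕ) (S : Finset ℕ) : SimpleGraph ℕ :=
  SimpleGraph.fromRel fun u v => g.Adj u v ∨ (u = n + 1 ∧ v ∈ S)

/-- All edges of `g` lie inside `{1, …, n}`. -/
def SupportedOn (g : SimpleGraph ℕ) (n : ℕ) : Prop :=
  ∀ u v, g.Adj u v → u ∈ Finset.Icc 1 n ∧ v ∈ Finset.Icc 1 n

section AddVertex

variable {g : SimpleGraph ℕ} {n : ℕ} {S : Finset ℕ}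

theorem addVertex_adj_old {u v : ℕ} (hu : u ≠ n + 1) (hv : v ≠ n + 1) :
    (addVertex g n S).Adj u v ↔ g.Adj u v := by
  simp only [addVertex, SimpleGraph.fromRel_adj, hu, hv, false_and, or_false]
  constructor
  · rintro ⟨-, h | h⟩
    exacts [h, h.symm]
  · exact fun h => ⟨h.ne, Or.inl h⟩

theorem addVertex_adj_new (hg : SupportedOn g n) (hS : S ⊆ Finset.Icc 1 n) {u : ℕ} :
    (addVertex g n S).Adj (n + 1) u ↔ u ∈ S := by
  have h1 : ¬ g.Adj (n + 1) u := fun h => by simpa using (hg _ _ h).1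
  have h2 : ¬ g.Adj u (n + 1) := fun h => by simpa using (hg _ _ h).2
  have h3 : n + 1 ∉ S := fun h => by simpa using hS h
  simp only [addVertex, SimpleGraph.fromRel_adj, h1, h2, h3, and_false, or_false, false_or,
    true_and]
  refine ⟨fun h => h.2, fun h => ⟨?_, h⟩⟩
  rintro rfl
  exact h3 h

theorem SupportedOn.addVertex (hg : SupportedOn g n) (hS : S ⊆ Finset.Icc 1 n) :
    SupportedOn (addVertex g n S) (n + 1) := by
  have hsub : Finset.Icc 1 n ⊆ Finset.Icc 1 (n + 1) := Finset.Icc_subset_Icc_right (Nat.le_succ n)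
  have hnew : n + 1 ∈ Finset.Icc 1 (n + 1) := by simp
  intro u v h
  by_cases hu : u = n + 1
  · subst hu
    exact ⟨hnew, hsub (hS ((addVertex_adj_new hg hS).1 h))⟩
  · by_cases hv : v = n + 1
    · subst hv
      exact ⟨hsub (hS ((addVertex_adj_new hg hS).1 h.symm)), hnew⟩
    · have := hg _ _ ((addVertex_adj_old hu hv).1 h)
      exact ⟨hsub this.1, hsub this.2⟩

theorem nbrsIn_addVertex_new (hg : SupportedOn g n) (hS : S ⊆ Finset.Icc 1 n) :
    nbrsIn (addVertex g n S) (n + 1) (n + 1) = S := by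
  ext u
  simp only [nbrsIn, Finset.mem_filter, addVertex_adj_new hg hS, and_iff_right_iff_imp]
  exact fun h => Finset.Icc_subset_Icc_right (Nat.le_succ n) (hS h)

theorem degIn_addVertex_new (hg : SupportedOn g n) (hS : S ⊆ Finset.Icc 1 n) :
    degIn (addVertex g n S) (n + 1) (n + 1) = S.card :=
  congrArg Finset.card (nbrsIn_addVertex_new hg hS)

theorem degIn_addVertex_old (hg : SupportedOn g n) (hS : S ⊆ Finset.Icc 1 n) {v : ℕ}
    (hv : v ∈ Finset.Icc 1 n) :
    degIn (addVertex g n S) (n + 1) v = degIn g n v + if v ∈ S then 1 else 0 := by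
  have hv' : v ≠ n + 1 := by have := Finset.mem_Icc.1 hv; omega
  have hins : Finset.Icc 1 (n + 1) = insert (n + 1) (Finset.Icc 1 n) := by
    ext u
    simp only [Finset.mem_insert, Finset.mem_Icc]
    omega
  have hfil : (Finset.Icc 1 n).filter (fun u => (addVertex g n S).Adj v u) =
      (Finset.Icc 1 n).filter fun u => g.Adj v u := by
    refine Finset.filter_congr fun u hu => addVertex_adj_old hv' ?_
    have := Finset.mem_Icc.1 hu
    omega
  have hnew : (addVertex g n S).Adj v (n + 1) ↔ v ∈ S := by
    rw [SimpleGraph.adj_comm, addVertex_adj_new hg hS]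
  rw [degIn, hins, Finset.filter_insert, hfil]
  by_cases h : v ∈ S
  · rw [if_pos (hnew.2 h), if_pos h, Finset.card_insert_of_notMem (by simp)]
    rfl
  · rw [if_neg (fun h' => h (hnew.1 h')), if_neg h]
    rfl

end AddVertex

/-- A graph on `{1, …, n}` together with slot numbers telling its open vertices apart. -/
structure Config where
  n : ℕ
  g : SimpleGraph ℕ
  slot : ℕ → ℕ

/-- The slots of the labels with positive deficit. -/
def openSlots (L : Finset (ℕ × ℕ)) : Finset ℕ := (L.filter fun p => 0 < p.2).image Prod.fst

/-- The deficit of a vertex with label `p` after a step attaching to the slots in `T`. -/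
def deficitAfter (T : Finset ℕ) (p : ℕ × ℕ) : ℕ := if p.1 ∈ T then p.2 - 1 else p.2

/-- The new label of a vertex with label `p` after a step attaching to the slots in `T`: slot `0`
is freed for the new vertex by moving the initial run of occupied slots up by one. -/
def relabel (L : Finset (ℕ × ℕ)) (T : Finset ℕ) (p : ℕ × ℕ) : ℕ × ℕ :=
  if deficitAfter T p = 0 then (0, 0)
  else (if ∀ r ≤ p.1, ∃ q ∈ L, q.1 = r ∧ 0 < deficitAfter T q then p.1 + 1 else p.1,
    deficitAfter T p)

theorem relabel_snd (L : Finset (ℕ × ℕ)) (T : Finset ℕ) (p : ℕ × ℕ) :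
    (relabel L T p).2 = deficitAfter T p := by
  unfold relabel
  split_ifs with h <;> simp [h]

namespace Config

variable (m : ℕ)

/-- The label of a vertex: its slot and its deficit. -/
def lab (x : Config) (v : ℕ) : ℕ × ℕ := (x.slot v, 2 * m - degIn x.g x.n v)

/-- The set of labels in use. -/
def labels (x : Config) : Finset (ℕ × ℕ) := (Finset.Icc 1 x.n).image (x.lab m)

/-- The open vertices whose slot lies in `T`. -/
def chosen (x : Config) (T : Finset ℕ) : Finset ℕ :=
  (openVerts m x.g x.n).filter fun v => x.slot v ∈ T

/-- Attach a new vertex to the open vertices whose slot lies in `T`. -/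
def attach (x : Config) (T : Finset ℕ) : Config where
  n := x.n + 1
  g := addVertex x.g x.n (x.chosen m T)
  slot v := if v = x.n + 1 then 0 else (relabel (x.labels m) T (x.lab m v)).1

/-- The sets of slots to which a new vertex may be attached. -/
def moves (x : Config) : Finset (Finset ℕ) := (openSlots (x.labels m)).powersetCard m

/-- Invariants of the configurations occurring in the attachment process. -/
structure Good (x : Config) : Prop where
  le_n : m + 1 ≤ x.n
  supp : SupportedOn x.g x.n
  sum_deficit : ∑ v ∈ Finset.Icc 1 x.n, (2 * m - degIn x.g x.n v) = m * (m + 1)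
  recent : ∀ j < m, x.slot (x.n - j) = j ∧ degIn x.g x.n (x.n - j) ≤ m + j
  slot_inj : ∀ u ∈ openVerts m x.g x.n, ∀ v ∈ openVerts m x.g x.n, x.slot u = x.slot v → u = v
  slot_closed : ∀ v ∈ Finset.Icc 1 x.n, 2 * m ≤ degIn x.g x.n v → x.slot v = 0
  slot_lt : ∀ v ∈ Finset.Icc 1 x.n, x.slot v < m * (m + 1)

variable {m} {x : Config} {T : Finset ℕ}

theorem mem_openSlots_labels {s : ℕ} :
    s ∈ openSlots (x.labels m) ↔ ∃ v ∈ openVerts m x.g x.n, x.slot v = s := by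
  simp only [openSlots, labels, lab, Finset.mem_image, Finset.mem_filter, mem_openVerts]
  constructor
  · rintro ⟨p, ⟨⟨v, hv, rfl⟩, h⟩, rfl⟩
    exact ⟨v, ⟨hv, by simpa using h⟩, rfl⟩
  · rintro ⟨v, ⟨hv, h⟩, rfl⟩
    exact ⟨_, ⟨⟨v, hv, rfl⟩, by simpa using h⟩, rfl⟩

theorem mem_chosen {v : ℕ} : v ∈ x.chosen m T ↔ v ∈ openVerts m x.g x.n ∧ x.slot v ∈ T :=
  Finset.mem_filter

theorem chosen_subset_openVerts : x.chosen m T ⊆ openVerts m x.g x.n := Finset.filter_subset _ _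

theorem chosen_subset : x.chosen m T ⊆ Finset.Icc 1 x.n :=
  chosen_subset_openVerts.trans (Finset.filter_subset _ _)

theorem image_slot_chosen (hT : T ⊆ openSlots (x.labels m)) : (x.chosen m T).image x.slot = T := by
  ext s
  simp only [Finset.mem_image, mem_chosen]
  constructor
  · rintro ⟨v, ⟨-, h⟩, rfl⟩
    exact h
  · intro hs
    obtain ⟨v, hv, rfl⟩ := mem_openSlots_labels.1 (hT hs)
    exact ⟨v, ⟨hv, hs⟩, rfl⟩

theorem Good.card_chosen (hx : x.Good m) (hT : T ∈ x.moves m) : (x.chosen m T).card = m := by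
  obtain ⟨hT, hc⟩ := Finset.mem_powersetCard.1 hT
  have h := Finset.card_image_of_injOn (s := x.chosen m T) (f := x.slot) fun u hu v hv =>
    hx.slot_inj u (chosen_subset_openVerts hu) v (chosen_subset_openVerts hv)
  rw [image_slot_chosen hT] at h
  omega

theorem Good.lab_attach_old (hx : x.Good m) {v : ℕ} (hv : v ∈ Finset.Icc 1 x.n) :
    (x.attach m T).lab m v = relabel (x.labels m) T (x.lab m v) := by
  have hv' : v ≠ x.n + 1 := by have := Finset.mem_Icc.1 hv; omega
  refine Prod.ext ?_ ?_
  · simp [lab, attach, hv']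
  · rw [relabel_snd]
    simp only [lab, attach, deficitAfter]
    rw [degIn_addVertex_old hx.supp chosen_subset hv]
    simp only [mem_chosen, mem_openVerts, hv, true_and]
    by_cases h : x.slot v ∈ T
    · simp only [h, and_true, if_true]
      split_ifs <;> omega
    · simp only [h, and_false, if_false, add_zero]

theorem Good.lab_attach_new (hx : x.Good m) (hT : T ∈ x.moves m) :
    (x.attach m T).lab m (x.n + 1) = (0, m) := by
  refine Prod.ext ?_ ?_
  · simp [lab, attach]
  · simp only [lab, attach]
    rw [degIn_addVertex_new hx.supp chosen_subset, hx.card_chosen hT]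
    omega

theorem Good.labels_attach (hx : x.Good m) (hT : T ∈ x.moves m) :
    (x.attach m T).labels m =
      insert (0, m) ((x.labels m).image (relabel (x.labels m) T)) := by
  have hins : Finset.Icc 1 (x.n + 1) = insert (x.n + 1) (Finset.Icc 1 x.n) := by
    ext u
    simp only [Finset.mem_insert, Finset.mem_Icc]
    omega
  have hn : (x.attach m T).n = x.n + 1 := rfl
  rw [labels, hn, hins, Finset.image_insert, hx.lab_attach_new hT]
  have himg : (x.labels m).image (relabel (x.labels m) T) =
      (Finset.Icc 1 x.n).image (relabel (x.labels m) T ∘ x.lab m) := Finset.image_image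
  rw [himg]
  exact congrArg _ (Finset.image_congr fun v hv => hx.lab_attach_old hv)

theorem Good.recent_mem_openVerts (hx : x.Good m) {j : ℕ} (hj : j < m) :
    x.n - j ∈ openVerts m x.g x.n := by
  have h1 := hx.le_n
  have h2 := hx.recent j hj
  rw [mem_openVerts, Finset.mem_Icc]
  omega

theorem Good.slot_attach_recent (hx : x.Good m) {j : ℕ} (hj : j + 1 < m) :
    (x.attach m T).slot (x.n - j) = j + 1 := by
  have hpos : ∀ r ≤ j, 0 < deficitAfter T (x.lab m (x.n - r)) := by
    intro r hr
    have := (hx.recent r (by omega)).2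
    have hlab : (x.lab m (x.n - r)).2 = 2 * m - degIn x.g x.n (x.n - r) := rfl
    unfold deficitAfter
    split_ifs <;> omega
  have hne : x.n - j ≠ x.n + 1 := by omega
  simp only [attach, hne, if_false, relabel, (hpos j le_rfl).ne']
  have hs : (x.lab m (x.n - j)).1 = j := (hx.recent j (by omega)).1
  rw [if_pos, hs]
  rw [hs]
  intro r hr
  exact ⟨_, Finset.mem_image_of_mem _ (mem_openVerts.1 (hx.recent_mem_openVerts (by omega))).1,
    (hx.recent r (by omega)).1, hpos r hr⟩

theorem Good.attach (hx : x.Good m) (hm : 1 < m) (hT : T ∈ x.moves m) :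
    (x.attach m T).Good m := by
  have hcard := hx.card_chosen hT
  have hn : (x.attach m T).n = x.n + 1 := rfl
  have hg : (x.attach m T).g = addVertex x.g x.n (x.chosen m T) := rfl
  have hle := hx.le_n
  have hcases : ∀ v, v ∈ Finset.Icc 1 (x.n + 1) → v = x.n + 1 ∨ v ∈ Finset.Icc 1 x.n := by
    intro v hv
    simp only [Finset.mem_Icc] at hv ⊢
    omega
  have hdeg : ∀ v ∈ Finset.Icc 1 x.n, degIn (x.attach m T).g (x.n + 1) v =
      degIn x.g x.n v + if v ∈ x.chosen m T then 1 else 0 := fun v hv =>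
    degIn_addVertex_old hx.supp chosen_subset hv
  have hdef : ∀ v ∈ Finset.Icc 1 x.n, 2 * m - degIn (x.attach m T).g (x.n + 1) v =
      deficitAfter T (x.lab m v) := fun v hv => by
    rw [← relabel_snd (x.labels m), ← hx.lab_attach_old hv]
    rfl
  have hslot : ∀ v ∈ Finset.Icc 1 x.n, (x.attach m T).slot v =
      (relabel (x.labels m) T (x.lab m v)).1 := fun v hv => by
    rw [← hx.lab_attach_old hv]
    rfl
  have hsum : ∑ v ∈ Finset.Icc 1 x.n, deficitAfter T (x.lab m v) + m = m * (m + 1) := by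
    have hone : ∑ v ∈ Finset.Icc 1 x.n, (if v ∈ x.chosen m T then 1 else 0) = m := by
      rw [← Finset.card_filter, Finset.filter_mem_eq_inter,
        Finset.inter_eq_right.2 chosen_subset, hcard]
    rw [← hx.sum_deficit]
    nth_rewrite 2 [← hone]
    rw [← Finset.sum_add_distrib]
    refine Finset.sum_congr rfl fun v hv => ?_
    rw [← hdef v hv, hdeg v hv]
    by_cases h : v ∈ x.chosen m T
    · have := (mem_openVerts.1 (chosen_subset_openVerts h)).2
      rw [if_pos h]
      omega
    · rw [if_neg h]
      omega
  have hocc : ∀ v ∈ Finset.Icc 1 x.n, degIn (x.attach m T).g (x.n + 1) v < 2 * m →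
      0 < deficitAfter T (x.lab m v) := fun v hv h => by
    rw [← hdef v hv]
    omega
  have hslot' : ∀ v ∈ Finset.Icc 1 x.n, degIn (x.attach m T).g (x.n + 1) v < 2 * m →
      (x.attach m T).slot v =
        if ∀ r ≤ x.slot v, ∃ q ∈ x.labels m, q.1 = r ∧ 0 < deficitAfter T q then x.slot v + 1
        else x.slot v := fun v hv h => by
    rw [hslot v hv, relabel, if_neg (hocc v hv h).ne']
    rfl
  have hself : ∀ v ∈ Finset.Icc 1 x.n, degIn (x.attach m T).g (x.n + 1) v < 2 * m →
      ∃ q ∈ x.labels m, q.1 = x.slot v ∧ 0 < deficitAfter T q := fun v hv h =>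
    ⟨_, Finset.mem_image_of_mem _ hv, rfl, hocc v hv h⟩
  have hopen : ∀ v ∈ Finset.Icc 1 x.n, degIn (x.attach m T).g (x.n + 1) v < 2 * m →
      v ∈ openVerts m x.g x.n := fun v hv h =>
    mem_openVerts.2 ⟨hv, lt_of_le_of_lt (by rw [hdeg v hv]; exact Nat.le_add_right _ _) h⟩
  have hnew : (x.attach m T).slot (x.n + 1) = 0 := by simp [Config.attach]
  have hne : ∀ v ∈ Finset.Icc 1 x.n, degIn (x.attach m T).g (x.n + 1) v < 2 * m →
      (x.attach m T).slot v ≠ 0 := fun v hv h h0 => by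
    rw [hslot' v hv h] at h0
    split_ifs at h0 with hb
    refine hb fun r hr => ?_
    obtain rfl : r = x.slot v := by omega
    exact hself v hv h
  have hbump : ∀ u ∈ Finset.Icc 1 x.n, ∀ v ∈ Finset.Icc 1 x.n,
      degIn (x.attach m T).g (x.n + 1) v < 2 * m →
      (∀ r ≤ x.slot u, ∃ q ∈ x.labels m, q.1 = r ∧ 0 < deficitAfter T q) →
      x.slot v = x.slot u + 1 →
      ∀ r ≤ x.slot v, ∃ q ∈ x.labels m, q.1 = r ∧ 0 < deficitAfter T q := by
    intro u _ v hv h hb huv r hr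
    rcases Nat.lt_or_ge (x.slot u) r with hlt | hge
    · obtain rfl : r = x.slot v := by omega
      exact hself v hv h
    · exact hb r hge
  refine ⟨by omega, hx.supp.addVertex chosen_subset, ?_, ?_, ?_, ?_, ?_⟩
  · rw [hn, Finset.sum_Icc_succ_top (by omega), Finset.sum_congr rfl hdef, hg,
      degIn_addVertex_new hx.supp chosen_subset, hcard, ← hsum]
    omega
  · rintro (_ | j) hj
    · rw [hn, hg, Nat.sub_zero, degIn_addVertex_new hx.supp chosen_subset, hcard]
      exact ⟨by simp [Config.attach], le_rfl⟩
    · rw [hn, Nat.add_sub_add_right]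
      refine ⟨hx.slot_attach_recent hj, ?_⟩
      rw [hdeg _ (mem_openVerts.1 (hx.recent_mem_openVerts (by omega))).1]
      have := (hx.recent j (by omega)).2
      split_ifs <;> omega
  · intro u hu v hv huv
    rw [mem_openVerts, hn] at hu hv
    rcases hcases u hu.1 with rfl | hu1 <;> rcases hcases v hv.1 with rfl | hv1
    · rfl
    · exact absurd (huv.symm.trans hnew) (hne v hv1 hv.2)
    · exact absurd (huv.trans hnew) (hne u hu1 hu.2)
    · refine hx.slot_inj u (hopen u hu1 hu.2) v (hopen v hv1 hv.2) ?_
      rw [hslot' u hu1 hu.2, hslot' v hv1 hv.2] at huv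
      split_ifs at huv with h1 h2 h2
      · omega
      · exact absurd (hbump u hu1 v hv1 hv.2 h1 huv.symm) h2
      · exact absurd (hbump v hv1 u hu1 hu.2 h2 huv) h1
      · exact huv
  · intro v hv h
    rcases hcases v hv with rfl | hv
    · simp [Config.attach]
    · rw [hslot v hv, relabel, if_pos]
      rw [← hdef v hv]
      rw [hn] at h
      omega
  · intro v hv
    have hK : 0 < m * (m + 1) := by positivity
    rcases hcases v hv with rfl | hv
    · rwa [hnew]
    · rw [hslot v hv, relabel]
      split_ifs with h0 hb
      · exact hK
      · have hsub : Finset.range (x.slot v + 1) ⊆ ((Finset.Icc 1 x.n).filter fun u =>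
            0 < deficitAfter T (x.lab m u)).image x.slot := by
          intro r hr
          obtain ⟨q, hq, hqr, hpos⟩ := hb r (Nat.lt_succ_iff.1 (Finset.mem_range.1 hr))
          obtain ⟨u, hu, rfl⟩ := Finset.mem_image.1 hq
          exact Finset.mem_image.2 ⟨u, Finset.mem_filter.2 ⟨hu, hpos⟩, hqr⟩
        have h1 := (Finset.card_le_card hsub).trans Finset.card_image_le
        have h2 : ((Finset.Icc 1 x.n).filter fun u => 0 < deficitAfter T (x.lab m u)).card ≤
            ∑ u ∈ Finset.Icc 1 x.n, deficitAfter T (x.lab m u) := by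
          rw [Finset.card_filter]
          refine Finset.sum_le_sum fun u _ => ?_
          split_ifs <;> omega
        rw [Finset.card_range] at h1
        change x.slot v + 1 < _
        omega
      · exact hx.slot_lt v hv

end Config

/-- A bound on the slots and deficits of labels. -/
abbrev labelBound (m : ℕ) : ℕ := m * (m + 1) + 2 * m

/-- Labels truncated to a finite type. -/
abbrev LabelCode (m : ℕ) : Type := Fin (labelBound m + 1) × Fin (labelBound m + 1)

/-- The code of a label. -/
def encodeLabel (m : ℕ) (p : ℕ × ℕ) : LabelCode m := (Fin.ofNat _ p.1, Fin.ofNat _ p.2)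

/-- The label with a given code. -/
def decodeLabel (m : ℕ) (c : LabelCode m) : ℕ × ℕ := (c.1, c.2)

theorem decodeLabel_encodeLabel {m : ℕ} {p : ℕ × ℕ} (h1 : p.1 ≤ labelBound m)
    (h2 : p.2 ≤ labelBound m) : decodeLabel m (encodeLabel m p) = p :=
  Prod.ext (Nat.mod_eq_of_lt (Nat.lt_succ_of_le h1)) (Nat.mod_eq_of_lt (Nat.lt_succ_of_le h2))

namespace Config

variable {m : ℕ} {x y : Config} {T : Finset ℕ}

/-- The rank-`k` type of a configuration together with its set of labels. -/
def colour (m k : ℕ) (x : Config) : RankType (LabelCode m) k Empty × Finset (ℕ × ℕ) :=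
  (rankType x.g x.n (encodeLabel m ∘ x.lab m) k Empty.elim, x.labels m)

theorem Good.lab_fst_le (hx : x.Good m) {v : ℕ} (hv : v ∈ Finset.Icc 1 x.n) :
    (x.lab m v).1 ≤ labelBound m :=
  (hx.slot_lt v hv).le.trans (Nat.le_add_right _ _)

theorem lab_snd_le (v : ℕ) : (x.lab m v).2 ≤ labelBound m :=
  (Nat.sub_le _ _).trans (Nat.le_add_left _ _)

theorem Good.decodeLabel_lab (hx : x.Good m) {v : ℕ} (hv : v ∈ Finset.Icc 1 x.n) :
    decodeLabel m (encodeLabel m (x.lab m v)) = x.lab m v :=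
  decodeLabel_encodeLabel (hx.lab_fst_le hv) (lab_snd_le v)

theorem Good.isLabelledExtension_attach (hx : x.Good m) (hT : T ∈ x.moves m) :
    IsLabelledExtension {c | 0 < (decodeLabel m c).2 ∧ (decodeLabel m c).1 ∈ T}
      (fun c => encodeLabel m (relabel (x.labels m) T (decodeLabel m c))) (encodeLabel m (0, m))
      x.n x.g (encodeLabel m ∘ x.lab m) (x.attach m T).g
      (encodeLabel m ∘ (x.attach m T).lab m) where
  adj_old u hu v hv := by
    rw [Finset.mem_Icc] at hu hv
    exact addVertex_adj_old (by omega) (by omega)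
  adj_new u hu := by
    refine (addVertex_adj_new hx.supp chosen_subset).trans ?_
    rw [mem_chosen, mem_openVerts, Set.mem_ofPred_eq, Function.comp_apply, hx.decodeLabel_lab hu]
    simp only [hu, true_and, lab, Nat.sub_pos_iff_lt]
  lab_old u hu := by
    simp only [Function.comp_apply]
    rw [hx.decodeLabel_lab hu, hx.lab_attach_old hu]
  lab_new := congrArg _ (hx.lab_attach_new hT)

theorem Good.finite_colour (m k : ℕ) : (colour m k '' {x | x.Good m}).Finite := by
  refine ((Set.finite_univ (α := RankType (LabelCode m) k Empty)).prod
    (((Finset.range (labelBound m + 1)) ×ˢ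
      (Finset.range (labelBound m + 1))).powerset.finite_toSet)).subset ?_
  rintro _ ⟨x, hx, rfl⟩
  refine ⟨Set.mem_univ _, Finset.mem_coe.2 (Finset.mem_powerset.2 fun p hp => ?_)⟩
  obtain ⟨v, hv, rfl⟩ := Finset.mem_image.1 hp
  exact Finset.mem_product.2 ⟨Finset.mem_range_succ_iff.2 (Good.lab_fst_le hx hv),
    Finset.mem_range_succ_iff.2 (lab_snd_le v)⟩

theorem moves_eq_of_labels_eq (h : x.labels m = y.labels m) : x.moves m = y.moves m := by
  rw [moves, moves, h]

theorem Good.colour_attach_eq {k : ℕ} (hx : x.Good m) (hy : y.Good m)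
    (h : x.colour m k = y.colour m k) (hT : T ∈ x.moves m) :
    (x.attach m T).colour m k = (y.attach m T).colour m k := by
  have hl : x.labels m = y.labels m := congrArg Prod.snd h
  have hT' : T ∈ y.moves m := moves_eq_of_labels_eq hl ▸ hT
  refine Prod.ext ?_ ?_
  · have hE := hx.isLabelledExtension_attach hT
    have hE' := hy.isLabelledExtension_attach hT'
    rw [← hl] at hE'
    have := rankType_extension hE hE' (le_trans (Nat.le_add_left 1 m) hx.le_n)
      (Empty.elim : Empty → Option Empty) (fun i => i.elim) (fun i => i.elim)
      (congrArg Prod.fst h)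
    rwa [Subsingleton.elim (extendTuple Empty.elim (x.n + 1) ∘ Empty.elim) Empty.elim,
      Subsingleton.elim (extendTuple Empty.elim (y.n + 1) ∘ Empty.elim) Empty.elim] at this
  · change (x.attach m T).labels m = (y.attach m T).labels m
    rw [hx.labels_attach hT, hy.labels_attach hT', hl]

theorem Good.range_mem_moves (hx : x.Good m) : Finset.range m ∈ x.moves m := by
  refine Finset.mem_powersetCard.2 ⟨fun j hj => ?_, Finset.card_range m⟩
  rw [Finset.mem_range] at hj
  exact mem_openSlots_labels.2 ⟨_, hx.recent_mem_openVerts hj, (hx.recent j hj).1⟩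

theorem Good.mem_chosen_range (hx : x.Good m) {v : ℕ} (hv : v ∈ Finset.Icc 1 x.n) :
    v ∈ x.chosen m (Finset.range m) ↔ x.n < v + m := by
  rw [Finset.mem_Icc] at hv
  constructor
  · intro h
    obtain ⟨h1, h2⟩ := mem_chosen.1 h
    rw [Finset.mem_range] at h2
    have := hx.slot_inj _ h1 _ (hx.recent_mem_openVerts h2) (hx.recent _ h2).1.symm
    omega
  · intro h
    obtain ⟨j, hj, rfl⟩ : ∃ j < m, v = x.n - j := ⟨x.n - v, by omega, by omega⟩
    exact mem_chosen.2 ⟨hx.recent_mem_openVerts hj, Finset.mem_range.2 (by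
      rwa [(hx.recent j hj).1])⟩

end Config

namespace Config

variable {m : ℕ} {x : Config}

theorem Good.lab_attach_range_snd (hx : x.Good m) {v : ℕ} (hv : v ∈ Finset.Icc 1 x.n) :
    ((x.attach m (Finset.range m)).lab m v).2 =
      (x.lab m v).2 - if x.n < v + m then 1 else 0 := by
  change 2 * m - degIn (addVertex _ _ _) (x.n + 1) _ = 2 * m - degIn _ _ _ - _
  rw [degIn_addVertex_old hx.supp chosen_subset hv, Nat.sub_add_eq]
  simp only [hx.mem_chosen_range hv]

theorem Good.lab_eq_zero (hx : x.Good m) {v : ℕ} (hv : v ∈ Finset.Icc 1 x.n)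
    (h : (x.lab m v).2 = 0) : x.lab m v = (0, 0) :=
  Prod.ext (hx.slot_closed v hv (Nat.sub_eq_zero_iff_le.1 h)) h

theorem Good.lab_attach_range_of_old (hx : x.Good m) (hm : 1 < m) {v : ℕ}
    (hv : v ∈ Finset.Icc 1 x.n) (hvm : v + m ≤ x.n)
    (hlast : (x.lab m (x.n - (m - 1))).2 = 1) :
    (x.attach m (Finset.range m)).lab m v = x.lab m v := by
  have hsnd := hx.lab_attach_range_snd hv
  rw [if_neg (by omega), Nat.sub_zero] at hsnd
  have hx' := hx.attach hm hx.range_mem_moves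
  have hv' : v ∈ Finset.Icc 1 (x.attach m (Finset.range m)).n :=
    Finset.Icc_subset_Icc_right (Nat.le_succ _) hv
  rcases Nat.eq_zero_or_pos (x.lab m v).2 with h0 | hpos
  · rw [hx.lab_eq_zero hv h0, hx'.lab_eq_zero hv' (hsnd.trans h0)]
  · refine Prod.ext ?_ hsnd
    have hopen : v ∈ openVerts m x.g x.n := mem_openVerts.2 ⟨hv, Nat.sub_pos_iff_lt.1 hpos⟩
    have hslot : m ≤ x.slot v := by
      by_contra hlt
      have := (hx.mem_chosen_range hv).1
        (mem_chosen.2 ⟨hopen, Finset.mem_range.2 (not_le.1 hlt)⟩)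
      omega
    rw [hx.lab_attach_old hv] at hsnd ⊢
    rw [relabel_snd] at hsnd
    rw [relabel, if_neg (by omega), if_neg]
    intro hall
    obtain ⟨q, hq, hq1, hq2⟩ := hall (m - 1) (by change _ ≤ x.slot v; omega)
    obtain ⟨w, hw, rfl⟩ := Finset.mem_image.1 hq
    have hwpos : 0 < (x.lab m w).2 := by
      unfold deficitAfter at hq2
      split_ifs at hq2 <;> omega
    have hlt : m - 1 < m := by omega
    have hweq : w = x.n - (m - 1) := hx.slot_inj _
      (mem_openVerts.2 ⟨hw, Nat.sub_pos_iff_lt.1 hwpos⟩) _ (hx.recent_mem_openVerts hlt)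
      (hq1.trans (hx.recent _ hlt).1.symm)
    rw [← hweq] at hlast
    rw [deficitAfter, hq1, if_pos (Finset.mem_range.2 hlt), hlast] at hq2
    omega

/-- The configuration obtained by attaching `j` times to the `m` most recent vertices. -/
def runRecent (m : ℕ) (x : Config) (j : ℕ) : Config :=
  (fun y => y.attach m (Finset.range m))^[j] x

theorem runRecent_succ (j : ℕ) :
    x.runRecent m (j + 1) = (x.runRecent m j).attach m (Finset.range m) :=
  Function.iterate_succ_apply' _ _ _

theorem runRecent_n (j : ℕ) : (x.runRecent m j).n = x.n + j := by
  induction j with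
  | zero => rfl
  | succ j ih =>
    rw [runRecent_succ]
    change (x.runRecent m j).n + 1 = _
    omega

theorem Good.runRecent (hx : x.Good m) (hm : 1 < m) (j : ℕ) : (x.runRecent m j).Good m := by
  induction j with
  | zero => exact hx
  | succ j ih =>
    rw [runRecent_succ]
    exact ih.attach hm ih.range_mem_moves

theorem Good.runRecent_adj (hx : x.Good m) (hm : 1 < m) (j : ℕ) :
    ∀ u ∈ Finset.Icc 1 (x.n + j), ∀ v ∈ Finset.Icc 1 (x.n + j),
      ((x.runRecent m j).g.Adj u v ↔
        if u ≤ x.n ∧ v ≤ x.n then x.g.Adj u v else u ≠ v ∧ u ≤ v + m ∧ v ≤ u + m) := by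
  induction j with
  | zero =>
    intro u hu v hv
    rw [if_pos ⟨(Finset.mem_Icc.1 hu).2, (Finset.mem_Icc.1 hv).2⟩]
    rfl
  | succ j ih =>
    have hn := runRecent_n (m := m) (x := x) j
    have hnew : ∀ v ∈ Finset.Icc 1 (x.n + j), (x.runRecent m (j + 1)).g.Adj (x.n + j + 1) v ↔
        x.n + j < v + m := by
      intro v hv
      rw [runRecent_succ, ← hn]
      rw [← hn] at hv
      exact (addVertex_adj_new (hx.runRecent hm j).supp chosen_subset).trans
        ((hx.runRecent hm j).mem_chosen_range hv)
    intro u hu v hv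
    rw [Finset.mem_Icc] at hu hv
    by_cases hu' : u = x.n + j + 1
    · by_cases hv' : v = x.n + j + 1
      · subst hu' hv'
        rw [if_neg (by omega)]
        simp
      · subst hu'
        rw [if_neg (by omega), hnew v (Finset.mem_Icc.2 (by omega))]
        omega
    · by_cases hv' : v = x.n + j + 1
      · subst hv'
        rw [if_neg (by omega), SimpleGraph.adj_comm, hnew u (Finset.mem_Icc.2 (by omega))]
        omega
      · rw [← ih u (Finset.mem_Icc.2 (by omega)) v (Finset.mem_Icc.2 (by omega)), runRecent_succ]
        exact addVertex_adj_old (by omega) (by omega)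

theorem Good.runRecent_lab_new (hx : x.Good m) (hm : 1 < m) (j : ℕ) {v : ℕ} (h1 : x.n < v)
    (h2 : v ≤ x.n + j) : (x.runRecent m j).lab m v =
      if x.n + j < v + m then (x.n + j - v, m - (x.n + j - v)) else (0, 0) := by
  have hsnd : ((x.runRecent m j).lab m v).2 = m - (x.n + j - v) := by
    induction j with
    | zero => omega
    | succ j ih =>
      have hn := runRecent_n (m := m) (x := x) j
      have hg := hx.runRecent hm j
      rw [runRecent_succ]
      by_cases hv : v = x.n + (j + 1)
      · have hv' : v = (x.runRecent m j).n + 1 := by omega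
        rw [hv', hg.lab_attach_new hg.range_mem_moves]
        omega
      · rw [hg.lab_attach_range_snd (Finset.mem_Icc.2 (by omega)), ih (by omega)]
        split_ifs <;> omega
  have hn := runRecent_n (m := m) (x := x) j
  have hg := hx.runRecent hm j
  split_ifs with h
  · refine Prod.ext ?_ hsnd
    have := (hg.recent (x.n + j - v) (by omega)).1
    rwa [hn, Nat.sub_sub_self h2] at this
  · exact hg.lab_eq_zero (Finset.mem_Icc.2 (by omega)) (by omega)

theorem Good.runRecent_lab_old (hx : x.Good m) (hm : 1 < m) {j : ℕ} (hj : m ≤ j) {v : ℕ}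
    (h1 : 1 ≤ v) (h2 : v ≤ x.n) :
    (x.runRecent m (j + 1)).lab m v = (x.runRecent m j).lab m v := by
  have hn := runRecent_n (m := m) (x := x) j
  rw [runRecent_succ]
  refine (hx.runRecent hm j).lab_attach_range_of_old hm (Finset.mem_Icc.2 (by omega)) (by omega) ?_
  rw [hx.runRecent_lab_new hm j (by omega) (by omega), if_pos (by omega)]
  simp only
  omega

theorem Good.labels_runRecent_succ (hx : x.Good m) (hm : 1 < m) {j : ℕ} (hj : m < j) :
    (x.runRecent m (j + 1)).labels m = (x.runRecent m j).labels m := by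
  have hn := runRecent_n (m := m) (x := x)
  ext p
  simp only [labels, Finset.mem_image, Finset.mem_Icc, hn]
  constructor
  · rintro ⟨v, hv, rfl⟩
    by_cases hvn : v ≤ x.n
    · exact ⟨v, by omega, (hx.runRecent_lab_old hm hj.le hv.1 hvn).symm⟩
    · rw [hx.runRecent_lab_new hm _ (by omega) hv.2]
      by_cases hv1 : v = x.n + 1
      · refine ⟨v, by omega, ?_⟩
        rw [hx.runRecent_lab_new hm _ (by omega) (by omega), if_neg (by omega),
          if_neg (by omega)]
      · refine ⟨v - 1, by omega, ?_⟩
        rw [hx.runRecent_lab_new hm _ (by omega) (by omega),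
          show x.n + j - (v - 1) = x.n + (j + 1) - v by omega]
        exact if_congr (by omega) rfl rfl
  · rintro ⟨v, hv, rfl⟩
    by_cases hvn : v ≤ x.n
    · exact ⟨v, by omega, hx.runRecent_lab_old hm hj.le hv.1 hvn⟩
    · refine ⟨v + 1, by omega, ?_⟩
      rw [hx.runRecent_lab_new hm _ (by omega) (by omega),
        hx.runRecent_lab_new hm _ (by omega) hv.2,
        show x.n + (j + 1) - (v + 1) = x.n + j - v by omega]
      exact if_congr (by omega) rfl rfl

theorem Good.exists_colour_runRecent_eq (hx : x.Good m) (hm : 1 < m) (k : ℕ) :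
    ∃ J, (x.runRecent m (J + 1)).colour m k = (x.runRecent m J).colour m k := by
  have hpos : 1 ≤ 2 ^ k := Nat.one_le_two_pow
  obtain ⟨D, hD⟩ : ∃ D, D = 2 ^ k * (x.n + m + 2) := ⟨_, rfl⟩
  have hD' : x.n + m + 2 ≤ D := by rw [hD]; exact Nat.le_mul_of_pos_left _ hpos
  refine ⟨D, Prod.ext ?_ (hx.labels_runRecent_succ hm (by omega))⟩
  have hn := runRecent_n (m := m) (x := x)
  have hle := hx.le_n
  have key := rankType_eq_of_similar (g := (x.runRecent m D).g) (g' := (x.runRecent m (D + 1)).g)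
    (N := x.n + D) (N' := x.n + (D + 1)) (lab := encodeLabel m ∘ (x.runRecent m D).lab m)
    (lab' := encodeLabel m ∘ (x.runRecent m (D + 1)).lab m) (R := x.n + m + 2) (by omega)
    ?_ ?_ k (ι := Bool) (a := fun b => cond b (x.n + D) 1)
    (b := fun b => cond b (x.n + (D + 1)) 1) ?_ ?_ (lo := false) (hi := true) rfl rfl rfl rfl ?_
  · have := rankType_comp (Empty.elim : Empty → Bool) key
    rw [Subsingleton.elim (_ ∘ Empty.elim) Empty.elim] at this
    rw [Subsingleton.elim ((fun b => cond b (x.n + (D + 1)) 1) ∘ Empty.elim) Empty.elim] at this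
    simp only [colour, hn]
    exact this.symm
  · intro u hu u' hu' hlow hhigh
    rw [Finset.mem_Icc] at hu hu'
    simp only [Function.comp_apply]
    congr 1
    by_cases hun : u ≤ x.n
    · obtain rfl : u = u' := by omega
      exact (hx.runRecent_lab_old hm (by omega) hu.1 hun).symm
    · rw [hx.runRecent_lab_new hm _ (by omega) hu.2, hx.runRecent_lab_new hm _ (by omega) hu'.2]
      rcases hhigh with h | h
      · rw [show x.n + (D + 1) - u' = x.n + D - u by omega]
        exact if_congr (by omega) rfl rfl
      · rw [if_neg (by omega), if_neg (by omega)]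
  · intro u hu u' hu' v hv v' hv' h1 h2 h3
    rw [hx.runRecent_adj hm _ u hu v hv, hx.runRecent_adj hm _ u' hu' v' hv']
    rw [Finset.mem_Icc] at hu hu' hv hv'
    by_cases h : u ≤ x.n ∧ v ≤ x.n
    · obtain rfl : u = u' := by omega
      obtain rfl : v = v' := by omega
      rw [if_pos h]
    · rw [if_neg h, if_neg (by omega)]
      omega
  · rintro (_ | _) <;> simp only [cond, Finset.mem_Icc] <;> omega
  · rintro (_ | _) <;> simp only [cond, Finset.mem_Icc] <;> omega
  · have hDz : (2 ^ k * ((x.n : ℤ) + m + 2)) = D := by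
      rw [hD]
      push_cast
      rfl
    rw [hDz]
    rintro (_ | _) (_ | _)
    · simp
    · simp only [cond]
      omega
    · simp only [cond]
      omega
    · simp

end Config

theorem finite_setOf_supportedOn (n : ℕ) : {g : SimpleGraph ℕ | SupportedOn g n}.Finite := by
  have hfin := ((Finset.Icc 1 n ×ˢ Finset.Icc 1 n).finite_toSet).finite_subsets
  refine (hfin.preimage (f := fun g : SimpleGraph ℕ => {p : ℕ × ℕ | g.Adj p.1 p.2})
    fun g _ g' _ h => ?_).subset fun g hg p hp => ?_
  · ext u v
    exact Set.ext_iff.1 h (u, v)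
  · exact Finset.mem_coe.2 (Finset.mem_product.2 (hg _ _ hp))

/-- The initial configuration of the attachment process. -/
def initialConfig (m : ℕ) : Config where
  n := m + 1
  g := completeOn (m + 1)
  slot v := m + 1 - v

theorem degIn_completeOn {n v : ℕ} (hv : v ∈ Finset.Icc 1 n) :
    degIn (completeOn n) n v = n - 1 := by
  have h : (Finset.Icc 1 n).filter (fun u => (completeOn n).Adj v u) =
      (Finset.Icc 1 n).erase v := by
    ext u
    simp only [completeOn, SimpleGraph.fromRel_adj, Finset.mem_filter, Finset.mem_erase, hv]
    tauto
  rw [degIn, h, Finset.card_erase_of_mem hv, Nat.card_Icc, Nat.add_sub_cancel]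

theorem initialConfig_good {m : ℕ} (hm : 1 < m) : (initialConfig m).Good m := by
  have hdeg : ∀ v ∈ Finset.Icc 1 (m + 1), degIn (completeOn (m + 1)) (m + 1) v = m :=
    fun v hv => degIn_completeOn hv
  refine ⟨le_rfl, ?_, ?_, ?_, ?_, ?_, ?_⟩
  · intro u v h
    simp only [initialConfig, completeOn, SimpleGraph.fromRel_adj] at h ⊢
    tauto
  · change ∑ v ∈ Finset.Icc 1 (m + 1), (2 * m - degIn (completeOn (m + 1)) (m + 1) v) = _
    rw [Finset.sum_congr rfl fun v hv => by rw [hdeg v hv], Finset.sum_const, Nat.card_Icc,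
      smul_eq_mul, Nat.add_sub_cancel, two_mul, Nat.add_sub_cancel, mul_comm]
  · intro j hj
    change m + 1 - (m + 1 - j) = j ∧ degIn (completeOn (m + 1)) (m + 1) (m + 1 - j) ≤ m + j
    rw [hdeg _ (Finset.mem_Icc.2 (by omega))]
    omega
  · intro u hu v hv h
    have hu' := Finset.mem_Icc.1 (mem_openVerts.1 hu).1
    have hv' := Finset.mem_Icc.1 (mem_openVerts.1 hv).1
    simp only [initialConfig] at h hu' hv'
    omega
  · intro v hv h
    have := hdeg v hv
    simp only [initialConfig] at h
    omega
  · intro v hv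
    have hv' := Finset.mem_Icc.1 hv
    simp only [initialConfig] at hv' ⊢
    have : m + 1 - v ≤ m := by omega
    nlinarith

namespace Config

variable {m : ℕ} {x : Config}

theorem openSlots_labels : openSlots (x.labels m) = (openVerts m x.g x.n).image x.slot := by
  ext s
  rw [mem_openSlots_labels, Finset.mem_image]

theorem Good.card_moves (hx : x.Good m) : (x.moves m).card = numOpenSets m x.n x.g := by
  rw [moves, Finset.card_powersetCard, openSlots_labels, Finset.card_image_of_injOn]
  · rfl
  · exact fun u hu v hv h => hx.slot_inj u hu v hv h

theorem Good.nbrsIn_attach (hx : x.Good m) (T : Finset ℕ) :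
    nbrsIn (x.attach m T).g (x.n + 1) (x.n + 1) = x.chosen m T :=
  nbrsIn_addVertex_new hx.supp chosen_subset

theorem Good.attach_g_injOn (hx : x.Good m) :
    Set.InjOn (fun T => (x.attach m T).g) (x.moves m : Set (Finset ℕ)) := by
  intro T hT T' hT' h
  simp only at h
  have h' := hx.nbrsIn_attach T
  rw [h, hx.nbrsIn_attach T'] at h'
  rw [← image_slot_chosen (Finset.mem_powersetCard.1 hT).1, ← h',
    image_slot_chosen (Finset.mem_powersetCard.1 hT').1]

theorem Good.exists_attach_of_isUAStep (hx : x.Good m) {g' : SimpleGraph ℕ}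
    (h : IsUAStep m x.n x.g g') : ∃ T ∈ x.moves m, g' = (x.attach m T).g := by
  obtain ⟨hsupp, hold, hcard, hnew⟩ := h
  set S := nbrsIn g' (x.n + 1) (x.n + 1) with hS
  have hmem : ∀ u, u ∈ S ↔ g'.Adj (x.n + 1) u := fun u => by
    rw [hS, nbrsIn, Finset.mem_filter, and_iff_right_iff_imp]
    exact fun h => (hsupp _ _ h).2
  have hopen : S ⊆ openVerts m x.g x.n := fun u hu => mem_openVerts.2 (hnew u ((hmem u).1 hu))
  have hinj : Set.InjOn x.slot (S : Set ℕ) := fun u hu v hv =>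
    hx.slot_inj u (hopen hu) v (hopen hv)
  have hch : x.chosen m (S.image x.slot) = S := by
    ext u
    rw [mem_chosen]
    constructor
    · rintro ⟨hu, hs⟩
      obtain ⟨v, hv, hvu⟩ := Finset.mem_image.1 hs
      rwa [← hx.slot_inj v (hopen hv) u hu hvu]
    · exact fun hu => ⟨hopen hu, Finset.mem_image_of_mem _ hu⟩
  refine ⟨S.image x.slot, Finset.mem_powersetCard.2 ⟨?_, ?_⟩, ?_⟩
  · rw [openSlots_labels]
    exact Finset.image_subset_image hopen
  · rw [Finset.card_image_of_injOn hinj, hcard]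
  · change g' = addVertex x.g x.n (x.chosen m (S.image x.slot))
    rw [hch]
    have hsub : S ⊆ Finset.Icc 1 x.n := hopen.trans (Finset.filter_subset _ _)
    ext u v
    by_cases hu : u = x.n + 1
    · rw [hu, ← hmem, addVertex_adj_new hx.supp hsub]
    · by_cases hv : v = x.n + 1
      · rw [hv, SimpleGraph.adj_comm, ← hmem, SimpleGraph.adj_comm,
          addVertex_adj_new hx.supp hsub]
      · rw [hold u v hu hv, addVertex_adj_old hu hv]

theorem Good.eq_of_isUAStep_attach (hx : x.Good m) {g : SimpleGraph ℕ} {T : Finset ℕ}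
    (hg : SupportedOn g x.n) (h : IsUAStep m x.n g (x.attach m T).g) : g = x.g := by
  have hout : ∀ {g : SimpleGraph ℕ}, SupportedOn g x.n → ∀ u v, u = x.n + 1 ∨ v = x.n + 1 →
      ¬ g.Adj u v := by
    intro g hg u v huv hadj
    have := hg u v hadj
    simp only [Finset.mem_Icc] at this
    omega
  ext u v
  by_cases huv : u = x.n + 1 ∨ v = x.n + 1
  · exact iff_of_false (hout hg u v huv) (hout hx.supp u v huv)
  · rw [not_or] at huv
    rw [← h.2.1 u v huv.1 huv.2]
    exact addVertex_adj_old huv.1 huv.2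

end Config

theorem measure_eq_zero_of_prob_eq_one {Ω : Type} [MeasurableSpace Ω] {P : Measure Ω}
    [IsProbabilityMeasure P] {S N : Set Ω} (hS : P S = 1) (hN : MeasurableSet N)
    (h : ∀ ω ∈ S, ω ∉ N) : P N = 0 := by
  rw [← prob_compl_eq_one_iff hN]
  exact le_antisymm prob_le_one (hS ▸ measure_mono h)

namespace UAProcess

variable {m : ℕ} {Ω : Type} [MeasurableSpace Ω] {P : Measure Ω}
  (X : UAProcess m P) {x : Config}

theorem measurableSet_supportedOn (n k : ℕ) : MeasurableSet {ω | SupportedOn (X.G n ω) k} := by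
  have h : {ω | SupportedOn (X.G n ω) k} =
      ⋃ g ∈ {g : SimpleGraph ℕ | SupportedOn g k}, {ω | X.G n ω = g} := by
    ext ω
    simp
  rw [h]
  exact (finite_setOf_supportedOn k).measurableSet_biUnion fun g _ => X.meas n g

variable [IsProbabilityMeasure P]

theorem measure_not_supportedOn {n : ℕ} (hm : 1 < m) (hn : m + 1 ≤ n) :
    P {ω | ¬ SupportedOn (X.G n ω) n} = 0 := by
  have hmeas := (X.measurableSet_supportedOn n n).compl
  rcases hn.eq_or_lt with rfl | hlt
  · refine measure_eq_zero_of_prob_eq_one X.init hmeas fun ω hω hω' => hω' ?_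
    rw [Set.mem_ofPred_eq] at hω
    rw [hω]
    exact (initialConfig_good hm).supp
  · obtain ⟨k, rfl⟩ : ∃ k, n = k + 1 := ⟨n - 1, by omega⟩
    exact measure_eq_zero_of_prob_eq_one (X.stepAdm k (by omega)) hmeas
      fun ω hω hω' => hω' hω.1

theorem ae_eq_iUnion_attach (hm : 1 < m) (hx : x.Good m) :
    {ω | X.G x.n ω = x.g} =ᵐ[P]
      ⋃ T ∈ x.moves m, {ω | X.G (x.n + 1) ω = (x.attach m T).g} := by
  have hmU : MeasurableSet (⋃ T ∈ x.moves m, {ω | X.G (x.n + 1) ω = (x.attach m T).g}) :=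
    (x.moves m).measurableSet_biUnion fun T _ => X.meas _ _
  have hmA := X.meas x.n x.g
  refine (ae_le_set.2 ?_).antisymm (ae_le_set.2 ?_)
  · refine measure_eq_zero_of_prob_eq_one (X.stepAdm x.n hx.le_n) (hmA.diff hmU) ?_
    rintro ω hω ⟨hA, hU⟩
    rw [Set.mem_ofPred_eq] at hω hA
    rw [hA] at hω
    obtain ⟨T, hT, h⟩ := hx.exists_attach_of_isUAStep hω
    exact hU (Set.mem_biUnion hT h)
  · rw [← nonpos_iff_eq_zero, ← X.measure_not_supportedOn hm hx.le_n,
      ← zero_add (P {ω | ¬ SupportedOn _ _}),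
      ← measure_eq_zero_of_prob_eq_one (X.stepAdm x.n hx.le_n)
        ((hmU.diff hmA).inter (X.measurableSet_supportedOn x.n x.n)) ?_]
    · refine (measure_mono fun ω hω => ?_).trans (measure_union_le _ _)
      by_cases h : SupportedOn (X.G x.n ω) x.n
      exacts [Or.inl ⟨hω, h⟩, Or.inr h]
    · rintro ω hω ⟨⟨hU, hA⟩, hs⟩
      obtain ⟨T, hT, h⟩ := Set.mem_iUnion₂.1 hU
      rw [Set.mem_ofPred_eq] at hω h
      rw [h] at hω
      exact hA (hx.eq_of_isUAStep_attach hs hω)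

theorem measure_attach (hm : 1 < m) (hx : x.Good m) {T : Finset ℕ} (hT : T ∈ x.moves m) :
    P {ω | X.G (x.n + 1) ω = (x.attach m T).g} =
      P {ω | X.G x.n ω = x.g} / ((x.moves m).card : ℝ≥0∞) := by
  rw [hx.card_moves, ← X.stepUnif x.n hx.le_n x.g hx.supp (x.chosen m T) (hx.card_chosen hT)
    fun v hv => mem_openVerts.1 (Config.chosen_subset_openVerts hv)]
  have hae := X.ae_eq_iUnion_attach hm hx
  refine measure_congr ((ae_le_set.2 ?_).antisymm (ae_le_set.2 ?_))
  · refine measure_mono_null ?_ (ae_le_set.1 hae.symm.le)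
    rintro ω ⟨h1, h2⟩
    refine ⟨Set.mem_biUnion hT h1, fun hA => h2 ⟨hA, ?_⟩⟩
    rw [Set.mem_ofPred_eq] at h1
    rw [h1, hx.nbrsIn_attach]
  · refine measure_mono_null ?_ (ae_le_set.1 hae.le)
    rintro ω ⟨⟨hA, h1⟩, h2⟩
    refine ⟨hA, fun hU => h2 ?_⟩
    obtain ⟨T', hT', h⟩ := Set.mem_iUnion₂.1 hU
    rw [Set.mem_ofPred_eq] at h ⊢
    rw [h, hx.nbrsIn_attach] at h1
    rw [h]
    change addVertex _ _ _ = addVertex _ _ _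
    rw [h1]

theorem measureReal_satFO_inter (hm : 1 < m) (φ : Language.graph.Sentence) (j : ℕ) {N : ℕ}
    (hx : x.Good m) (hN : N = x.n + j) :
    P.real ({ω | X.G x.n ω = x.g} ∩ {ω | SatFO (X.G N ω) N φ}) =
      P.real {ω | X.G x.n ω = x.g} * (avgStep (Config.moves m) (Config.attach m))^[j]
        (fun y => if SatFO y.g y.n φ then 1 else 0) x := by
  induction j generalizing x with
  | zero =>
    obtain rfl : N = x.n := hN
    simp only [Function.iterate_zero, id_eq]
    split_ifs with h
    · rw [mul_one]
      congr 1
      refine Set.inter_eq_left.2 fun ω hω => ?_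
      rw [Set.mem_ofPred_eq] at hω ⊢
      rwa [hω]
    · rw [mul_zero]
      convert measureReal_empty
      refine Set.eq_empty_of_forall_notMem fun ω hω => h ?_
      have h1 : X.G x.n ω = x.g := hω.1
      have h2 : SatFO (X.G x.n ω) x.n φ := hω.2
      rwa [h1] at h2
  | succ j ih =>
    have hae := X.ae_eq_iUnion_attach hm hx
    set E := {ω | SatFO (X.G N ω) N φ}
    have hsum : P.real ({ω | X.G x.n ω = x.g} ∩ E) =
        ∑ T ∈ x.moves m, P.real ({ω | X.G (x.n + 1) ω = (x.attach m T).g} ∩ E) := by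
      have h1 := measureReal_congr (hae.inter (Filter.EventuallyEq.refl (ae P) E))
      rw [h1, ← measureReal_restrict_apply
        ((x.moves m).measurableSet_biUnion fun T _ => X.meas _ _),
        measureReal_biUnion_finset ?_ fun T _ => X.meas _ _]
      · exact Finset.sum_congr rfl fun T _ => measureReal_restrict_apply (X.meas _ _)
      · intro T hT T' hT' hne
        refine Set.disjoint_left.2 fun ω h h' => hne (hx.attach_g_injOn hT hT' ?_)
        exact (Eq.symm h).trans h'
    rw [hsum, Function.iterate_succ_apply', avgStep, mul_div_assoc', Finset.mul_sum,
      Finset.sum_div]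
    refine Finset.sum_congr rfl fun T hT => ?_
    have hT' : P.real {ω | X.G (x.n + 1) ω = (x.attach m T).g} =
        P.real {ω | X.G x.n ω = x.g} / (x.moves m).card := by
      rw [measureReal_def, X.measure_attach hm hx hT, ENNReal.toReal_div, ENNReal.toReal_natCast,
        measureReal_def]
    have := ih (x := x.attach m T) (hx.attach hm hT) (by rw [hN]; change _ = x.n + 1 + j; omega)
    change P.real ({ω | X.G (x.n + 1) ω = (x.attach m T).g} ∩ E) =
      P.real {ω | X.G (x.n + 1) ω = (x.attach m T).g} * _ at this
    rw [this, hT']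
    ring

theorem measureReal_satFO (hm : 1 < m) (φ : Language.graph.Sentence) (j : ℕ) :
    P.real {ω | SatFO (X.G (j + (m + 1)) ω) (j + (m + 1)) φ} =
      (avgStep (Config.moves m) (Config.attach m))^[j]
        (fun y => if SatFO y.g y.n φ then 1 else 0) (initialConfig m) := by
  have h := X.measureReal_satFO_inter hm φ j (initialConfig_good hm) (Nat.add_comm j (m + 1))
  have hinit : {ω | X.G (m + 1) ω = completeOn (m + 1)} =ᵐ[P] Set.univ :=
    ae_eq_univ.2 ((prob_compl_eq_zero_iff (X.meas _ _)).2 X.init)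
  change P.real ({ω | X.G (m + 1) ω = completeOn (m + 1)} ∩ _) =
    P.real {ω | X.G (m + 1) ω = completeOn (m + 1)} * _ at h
  rw [measureReal_congr hinit, probReal_univ, one_mul, measureReal_congr
    (hinit.inter (Filter.EventuallyEq.refl (ae P)
      {ω | SatFO (X.G (j + (m + 1)) ω) (j + (m + 1)) φ})), Set.univ_inter] at h
  exact h

end UAProcess

/-- For every integer `m > 1`, the random uniform attachment graph process
with degree cap `d = 2m` obeys the first-order convergence law: for every first-order
sentence `φ` in the language of graphs, the probability `P(G n ⊨ φ)` converges as
`n → ∞`. -/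
theorem uniform_attachment_first_order_convergence_law
    (m : ℕ) (hm : 1 < m)
    {Ω : Type} [MeasurableSpace Ω] (P : Measure Ω) [IsProbabilityMeasure P]
    (X : UAProcess m P) (φ : Language.graph.Sentence) :
    ∃ L : ℝ≥0∞, Tendsto (fun n => P {ω | SatFO (X.G n ω) n φ}) atTop (𝓝 L) := by
  obtain ⟨k, hk⟩ := exists_rank_satFO_iff φ
  obtain ⟨L, hL⟩ := exists_tendsto_avgStep (Config.Good.finite_colour m k) (Config.moves m)
    (Config.attach m) (Finset.range m) (fun x hx => hx.range_mem_moves)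
    (fun x hx T hT => hx.attach hm hT)
    (fun x y _ _ h => Config.moves_eq_of_labels_eq (congrArg Prod.snd h))
    (fun x y hx hy h T hT => hx.colour_attach_eq hy h hT)
    (fun x hx => hx.exists_colour_runRecent_eq hm k)
    (fun y => if SatFO y.g y.n φ then 1 else 0)
    (fun x y hx _ h => if_congr
      (hk ((Nat.le_add_left 1 m).trans hx.le_n) (congrArg Prod.fst h)) rfl rfl)
    (initialConfig m) (initialConfig_good hm)
  refine ⟨ENNReal.ofReal L, (tendsto_add_atTop_iff_nat (m + 1)).1 ?_⟩
  refine (ENNReal.tendsto_ofReal hL).congr fun j => ?_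
  rw [← X.measureReal_satFO hm φ j, ofReal_measureReal]
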